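/- For every prime p ≥ 5, Ψ_{n-3}^p(3), the number of isomorphism classes of regular p-groups of type (n-3, 3), equals 6 if n = 7, equals 8 if n = 8, and equals 9 if n ≥ 9. -/

import Mathlib

/-- `℧_1(H) = ⟨h^p : h ∈ H⟩` for a subgroup `H`. -/
def MhoOne (p : ℕ) {P : Type} [Group P] (H : Subgroup P) : Subgroup P :=
  Subgroup.closure {y : P | ∃ x ∈ H, y = x ^ p}

/-- A `p`-group `P` is regular if for all `x y : P` there is
`z ∈ ℧_1(γ_2(⟨x,y⟩))` with `x^p * y^p = (x*y)^p * z`. -/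
def IsRegularPGroup (p : ℕ) (P : Type) [Group P] : Prop :=
  ∀ x y : P,
    ∃ z ∈ MhoOne p ⁅Subgroup.closure {x, y}, Subgroup.closure {x, y}⁆,
      x ^ p * y ^ p = (x * y) ^ p * z

/-- `Ω_i(P) = ⟨x : x^(p^i) = 1⟩`. -/
def OmegaSubgroup (p : ℕ) (P : Type) [Group P] (i : ℕ) : Subgroup P :=
  Subgroup.closure {x : P | x ^ p ^ i = 1}

/-- `ω_i(P)`, defined by `p ^ ω_i(P) = |Ω_i(P)/Ω_{i-1}(P)|`. -/
noncomputable def omegaInv (p : ℕ) (P : Type) [Group P] (i : ℕ) : ℕ :=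
  ((OmegaSubgroup p P (i - 1)).relIndex (OmegaSubgroup p P i)).factorization p

/-- `μ_j(P)` (for `j ≥ 1`): the dual partition of `(ω_1(P), ω_2(P), ...)`;
the type invariants of `P` are `μ_1(P) ≥ μ_2(P) ≥ ...`. -/
noncomputable def muInv (p : ℕ) (P : Type) [Group P] (j : ℕ) : ℕ :=
  Nat.card {i : ℕ // 1 ≤ i ∧ j ≤ omegaInv p P i}

/-- `P` has type invariants given by the list `l`. -/
def HasTypeInvariants (p : ℕ) (P : Type) [Group P] (l : List ℕ) : Prop :=
  ∀ i : ℕ, muInv p P (i + 1) = l.getD i 0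

/-- The multiplication extracted from a group structure. -/
def mulOfGroup (G : Type) (s : Group G) : Mul G := by letI := s; infer_instance

/-- The number of isomorphism classes of groups of order `N` whose group structure
satisfies the predicate `Q`. -/
noncomputable def groupClassCount (N : ℕ) (Q : Group (Fin N) → Prop) : ℕ :=
  Nat.card (Quot fun s t : {s : Group (Fin N) // Q s} =>
    Nonempty (@MulEquiv (Fin N) (Fin N) (mulOfGroup _ s.1) (mulOfGroup _ t.1)))

/-- `Ψ_e^p(λ)`: the number of isomorphism classes of regular `p`-groups of type
`(e, λ_1, ..., λ_k)`; such a group has order `p ^ (e + λ_1 + ... + λ_k)`. -/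
noncomputable def PsiType (p e : ℕ) (l : List ℕ) : ℕ :=
  groupClassCount (p ^ (e + l.sum)) fun s =>
    letI := s
    IsRegularPGroup p (Fin (p ^ (e + l.sum))) ∧
      HasTypeInvariants p (Fin (p ^ (e + l.sum))) (e :: l)

/-!
In a regular `p`-group `P` every element of `℧_1(P)` is a `p`-th power and
`|Ω_1(P)| = |P : ℧_1(P)|`, so type `(e, l)` forces `|P : ℧_1(P)| ≤ p ^ 2`. Induction on `|P|`,
factoring out a central subgroup of order `p` inside the derived subgroup `D`, shows that `D` is
cyclic. Then `D ≤ ⟨z⟩` with `z` not a `p`-th power, so `z` belongs to a generating pair and `P` is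
metacyclic.

For odd `p` the generators can be normalised to `a ^ p ^ m = 1`, `b ^ p ^ k = a ^ p ^ l` and
`b * a * b⁻¹ = a ^ (1 + p ^ r)`; replacing `a` by some `a * b ^ y` achieves `r ≤ l`, and then
`m = l + u`, `k = e - u` with `1 ≤ r ≤ l` and `0 ≤ u ≤ min r (e - l)`. The order `p ^ (k + r)` and
the exponent `p ^ k` of the abelianization recover `(r, u)`. Conversely, every such pair is realised
by a cyclic extension of a cyclic group; the result is regular because `p` is odd and its derived
subgroup is cyclic. Summing over `r` gives `∑ r ∈ Icc 1 l, (min r (e - l) + 1)` classes.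
-/

open scoped commutatorElement

section Generation

variable {G : Type*} [Group G]

theorem closure_pair_le {x y : G} {H : Subgroup G} (hx : x ∈ H) (hy : y ∈ H) :
    Subgroup.closure {x, y} ≤ H :=
  (Subgroup.closure_le H).2 (Set.pair_subset hx hy)

theorem left_mem_closure_pair (x y : G) : x ∈ Subgroup.closure {x, y} :=
  Subgroup.subset_closure (Set.mem_insert x {y})

theorem right_mem_closure_pair (x y : G) : y ∈ Subgroup.closure {x, y} :=
  Subgroup.subset_closure (Set.mem_insert_of_mem x rfl)

theorem conj_mem_of_commutator_le {H M : Subgroup G} (hM : ⁅H, H⁆ ≤ M) {x g : G} (hx : x ∈ H)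
    (hg : g ∈ H) (hxM : x ∈ M) : g * x * g⁻¹ ∈ M := by
  have h : g * x * g⁻¹ = ⁅g, x⁆ * x := by simp [commutatorElement_def]
  rw [h]
  exact M.mul_mem (hM (Subgroup.commutator_mem_commutator hg hx)) hxM

theorem commutatorElement_mem_of_mem_closure {s : Set G} {T : Subgroup G} {y : G}
    (hT : ∀ g ∈ Subgroup.closure s, ∀ t ∈ T, g * t * g⁻¹ ∈ T) (hs : ∀ x ∈ s, ⁅x, y⁆ ∈ T)
    {x : G} (hx : x ∈ Subgroup.closure s) : ⁅x, y⁆ ∈ T := by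
  induction hx using Subgroup.closure_induction with
  | mem x hx => exact hs x hx
  | one => simp
  | mul a b ha _ iha ihb =>
    have h : ⁅a * b, y⁆ = (a * ⁅b, y⁆ * a⁻¹) * ⁅a, y⁆ := by
      simp only [commutatorElement_def]; group
    exact h ▸ T.mul_mem (hT a ha _ ihb) iha
  | inv a ha iha =>
    have h : ⁅a⁻¹, y⁆ = a⁻¹ * ⁅a, y⁆⁻¹ * a⁻¹⁻¹ := by
      simp only [commutatorElement_def]; group
    exact h ▸ hT _ (inv_mem ha) _ (inv_mem iha)

theorem commutator_closure_le {s : Set G} {T : Subgroup G}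
    (hT : ∀ g ∈ Subgroup.closure s, ∀ t ∈ T, g * t * g⁻¹ ∈ T)
    (hs : ∀ x ∈ s, ∀ y ∈ s, ⁅x, y⁆ ∈ T) :
    ⁅Subgroup.closure s, Subgroup.closure s⁆ ≤ T := by
  refine Subgroup.commutator_le.2 fun x hx y hy =>
    commutatorElement_mem_of_mem_closure hT (fun x hx => ?_) hx
  rw [← commutatorElement_inv]
  exact inv_mem (commutatorElement_mem_of_mem_closure hT (fun y hy => hs y hy x hx) hy)

theorem commutator_closure_pair_le {x y : G} {T : Subgroup G}
    (hT : ∀ g ∈ Subgroup.closure {x, y}, ∀ t ∈ T, g * t * g⁻¹ ∈ T) (hxy : ⁅x, y⁆ ∈ T) :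
    ⁅Subgroup.closure {x, y}, Subgroup.closure {x, y}⁆ ≤ T := by
  refine commutator_closure_le hT ?_
  rintro _ (rfl | rfl) _ (rfl | rfl)
  · simp
  · exact hxy
  · rw [← commutatorElement_inv]
    exact inv_mem hxy
  · simp

theorem commute_of_le_zpowers {H : Subgroup G} {z x y : G} (hH : H ≤ Subgroup.zpowers z)
    (hx : x ∈ H) (hy : y ∈ H) : Commute x y := by
  obtain ⟨i, rfl⟩ := Subgroup.mem_zpowers_iff.1 (hH hx)
  obtain ⟨j, rfl⟩ := Subgroup.mem_zpowers_iff.1 (hH hy)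
  exact Commute.zpow_zpow_self _ _ _

theorem zpowers_normal_of_closure_eq_top [Finite G] {s : Set G} {d : G}
    (hs : Subgroup.closure s = ⊤) (hd : ∀ g ∈ s, g * d * g⁻¹ ∈ Subgroup.zpowers d) :
    (Subgroup.zpowers d).Normal := by
  rw [← Subgroup.normalizer_eq_top_iff, eq_top_iff, ← hs, Subgroup.closure_le]
  refine fun g hg => Subgroup.mem_normalizer_fintype fun n hn => ?_
  obtain ⟨i, rfl⟩ := Subgroup.mem_zpowers_iff.1 hn
  exact conj_zpow (a := g) (b := d) ▸ Subgroup.zpow_mem _ (hd g hg) i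

end Generation

section PGroups

variable {p : ℕ} [hp : Fact p.Prime] {G : Type*} [Group G]

theorem mem_zpowers_zpow_of_not_dvd (hG : IsPGroup p G) (b : G) {j : ℤ} (hj : ¬ (p : ℤ) ∣ j) :
    b ∈ Subgroup.zpowers (b ^ j) := by
  obtain ⟨k, hk⟩ := IsPGroup.iff_orderOf.1 hG b
  rw [mem_zpowers_zpow_iff, ← Int.isCoprime_iff_gcd_eq_one, hk, Nat.cast_pow]
  exact ((Nat.prime_iff_prime_int.1 hp.out).coprime_iff_not_dvd.2 hj).symm.pow_right

variable [Finite G]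

theorem normal_and_index_eq_of_isCoatom (hG : IsPGroup p G) {M : Subgroup G} (hM : IsCoatom M) :
    M.Normal ∧ M.index = p := by
  obtain ⟨i, hi⟩ := IsPGroup.iff_card.1 (hG.to_subgroup M)
  obtain ⟨j, hj⟩ := hG.index M
  have hj0 : j ≠ 0 := by
    rintro rfl
    exact hM.1 (Subgroup.index_eq_one.1 (by rw [hj, pow_zero]))
  have hij : Nat.card G = p ^ (i + j) := by rw [← M.card_mul_index, hi, hj, pow_add]
  obtain ⟨K, hK, hMK⟩ := Sylow.exists_subgroup_card_pow_prime_le p (n := i) (m := i + j - 1)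
    (hij ▸ pow_dvd_pow p (by lia)) M hi (by lia)
  have hKtop : K ≠ ⊤ := by
    rintro rfl
    rw [Subgroup.card_top, hij] at hK
    have := Nat.pow_right_injective hp.out.two_le hK
    lia
  have hKM : K = M := by_contra fun h => hKtop (hM.2 K (lt_of_le_of_ne hMK (Ne.symm h)))
  have hij1 : i + j - 1 = i := Nat.pow_right_injective hp.out.two_le (by
    simp only; rw [← hK, hKM, hi])
  have hMidx : M.index = p := by rw [hj, show j = 1 by lia, pow_one]
  refine ⟨Subgroup.normal_of_index_eq_minFac_card ?_, hMidx⟩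
  rw [hMidx, hij, hp.out.pow_minFac (by lia)]

theorem commutator_le_frattini (hG : IsPGroup p G) : commutator G ≤ frattini G := by
  refine le_iInf₂ fun M hM => ?_
  obtain ⟨hMn, hMp⟩ := normal_and_index_eq_of_isCoatom hG hM
  have : IsCyclic (G ⧸ M) := isCyclic_of_prime_card (hMp ▸ (Subgroup.index_eq_card M).symm)
  exact Subgroup.Normal.quotient_commutative_iff_commutator_le.1 inferInstance

theorem pow_mem_frattini (hG : IsPGroup p G) (g : G) : g ^ p ∈ frattini G := by
  refine Subgroup.mem_iInf.2 fun M => Subgroup.mem_iInf.2 fun hM => ?_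
  obtain ⟨hMn, hMp⟩ := normal_and_index_eq_of_isCoatom hG hM
  exact hMp ▸ M.pow_index_mem g

theorem exists_lt_mem_commutator_le (hG : IsPGroup p G) {H : Subgroup G} {x : G} (hx : x ∈ H)
    (hH : ¬ H ≤ Subgroup.zpowers x) : ∃ M < H, x ∈ M ∧ ⁅H, H⁆ ≤ M := by
  have hz : Subgroup.zpowers (⟨x, hx⟩ : H) ≠ ⊤ := fun h => hH fun y hy => by
    obtain ⟨k, hk⟩ := Subgroup.mem_zpowers_iff.1 (h.ge (Subgroup.mem_top (⟨y, hy⟩ : H)))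
    exact Subgroup.mem_zpowers_iff.2 ⟨k, congrArg Subtype.val hk⟩
  obtain ⟨M, hM, hzM⟩ := (eq_top_or_exists_le_coatom _).resolve_left hz
  refine ⟨M.map H.subtype, lt_of_le_of_ne (Subgroup.map_subtype_le M) fun h => hM.1 ?_, ?_, ?_⟩
  · exact Subgroup.map_injective H.subtype_injective (by
      rwa [← MonoidHom.range_eq_map, Subgroup.range_subtype])
  · exact Subgroup.mem_map_of_mem H.subtype (hzM (Subgroup.mem_zpowers _))
  · have hc := (commutator_le_frattini (hG.to_subgroup H)).trans (frattini_le_coatom hM)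
    exact (Subgroup.map_subtype_commutator H).ge.trans (Subgroup.map_mono hc)

theorem mul_index_le_of_lt (hG : IsPGroup p G) {A B : Subgroup G} (h : A < B) :
    p * B.index ≤ A.index := by
  obtain ⟨i, hi⟩ := hG.index A
  obtain ⟨j, hj⟩ := hG.index B
  have hji : j < i :=
    (Nat.pow_lt_pow_iff_right hp.out.one_lt).1 (hi ▸ hj ▸ Subgroup.index_strictAnti h)
  rw [hi, hj, ← pow_succ']
  exact Nat.pow_le_pow_right hp.out.pos hji

theorem exists_closure_pair_eq_top (hG : IsPGroup p G) {N : Subgroup G} (hN : N ≤ frattini G)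
    (hidx : N.index ≤ p ^ 2) {u : G} (hu : u ∉ N) : ∃ y, Subgroup.closure {u, y} = ⊤ := by
  by_contra! hy
  have hlt : ∀ {A B : Subgroup G} {g : G}, A ≤ B → g ∉ A → g ∈ B → p * B.index ≤ A.index :=
    fun hAB hgA hgB => mul_index_le_of_lt hG (lt_of_le_of_ne hAB fun h => hgA (h ▸ hgB))
  have hnot : ∀ y, Subgroup.closure {u, y} ⊔ N ≠ ⊤ := fun y h =>
    hy y (frattini_nongenerating (eq_top_iff.2 (h.ge.trans (sup_le_sup_left hN _))))
  obtain ⟨y, -, hyu⟩ : ∃ y ∈ (⊤ : Subgroup G), y ∉ Subgroup.closure {u, u} ⊔ N :=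
    SetLike.exists_of_lt (lt_top_iff_ne_top.2 (hnot u))
  obtain ⟨w, -, hwy⟩ : ∃ w ∈ (⊤ : Subgroup G), w ∉ Subgroup.closure {u, y} ⊔ N :=
    SetLike.exists_of_lt (lt_top_iff_ne_top.2 (hnot y))
  have h₁ := hlt le_sup_right hu
    (Subgroup.mem_sup_left (T := N) (left_mem_closure_pair u u))
  have h₂ := hlt (sup_le_sup_right
      (closure_pair_le (left_mem_closure_pair u y) (left_mem_closure_pair u y)) N) hyu
    (Subgroup.mem_sup_left (right_mem_closure_pair u y))
  have h₃ := hlt le_top hwy (Subgroup.mem_top w)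
  rw [Subgroup.index_top] at h₃
  have hlt3 : p ^ 3 ≤ p ^ 2 := calc
    p ^ 3 = p * (p * (p * 1)) := by ring
    _ ≤ N.index := (Nat.mul_le_mul_left p ((Nat.mul_le_mul_left p h₃).trans h₂)).trans h₁
    _ ≤ p ^ 2 := hidx
  exact absurd hlt3 (not_le.2 (Nat.pow_lt_pow_right hp.out.one_lt (by lia)))

theorem exists_mem_center_orderOf_eq (hG : IsPGroup p G) {N : Subgroup G} [N.Normal]
    (hN : N ≠ ⊥) : ∃ m ∈ N, m ∈ Subgroup.center G ∧ orderOf m = p := by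
  have hdvd : p ∣ Nat.card N :=
    (hG.to_subgroup N).card_eq_or_dvd.resolve_left (mt Subgroup.card_eq_one.1 hN)
  obtain ⟨b, hb, hb1⟩ := (hG.of_equiv ConjAct.toConjAct)
    |>.exists_fixed_point_of_prime_dvd_card_of_fixed_point N hdvd (a := 1) fun g => smul_one g
  have hbc : (b : G) ∈ Subgroup.center G := Subgroup.mem_center_iff.2 fun g => by
    have h := congrArg Subtype.val (hb (ConjAct.toConjAct g))
    rw [ConjAct.Subgroup.val_conj_smul, ConjAct.toConjAct_smul] at h
    exact mul_inv_eq_iff_eq_mul.1 h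
  have hpb : p ∣ orderOf (b : G) := hG.dvd_orderOf fun h => hb1 (Subtype.ext h.symm)
  refine ⟨(b : G) ^ (orderOf (b : G) / p), N.pow_mem b.2 _, Subgroup.pow_mem _ hbc _, ?_⟩
  exact orderOf_pow_orderOf_div (orderOf_pos (b : G)).ne' hpb

theorem exists_mem_zpowers_forall_ne_pow (hG : IsPGroup p G) {d : G} (hd : d ≠ 1) :
    ∃ u, d ∈ Subgroup.zpowers u ∧ ∀ s, u ≠ s ^ p := by
  obtain ⟨u, hu, hmax⟩ := Set.exists_max_image {u : G | d ∈ Subgroup.zpowers u} orderOf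
    (Set.toFinite _) ⟨d, Subgroup.mem_zpowers d⟩
  refine ⟨u, hu, ?_⟩
  rintro s rfl
  have hds : d ∈ Subgroup.zpowers s :=
    (Subgroup.zpowers_le.2 (Subgroup.pow_mem _ (Subgroup.mem_zpowers s) p) :
      Subgroup.zpowers (s ^ p) ≤ _) hu
  have hs : s ≠ 1 := by
    rintro rfl
    exact hd (by simpa using hds)
  have hle := hmax s hds
  rw [orderOf_pow_of_dvd hp.out.ne_zero (hG.dvd_orderOf hs)] at hle
  exact absurd hle (not_le.2 (Nat.div_lt_self (orderOf_pos s) hp.out.one_lt))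

end PGroups

section Omega

variable {p : ℕ} {P : Type} [Group P]

theorem exists_pow_eq_of_mem_mhoOne {H : Subgroup P}
    (hmul : ∀ x ∈ H, ∀ y ∈ H, ∃ z ∈ H, x ^ p * y ^ p = z ^ p) {g : P} (hg : g ∈ MhoOne p H) :
    ∃ z ∈ H, z ^ p = g := by
  induction hg using Subgroup.closure_induction with
  | mem _ h => exact ⟨h.choose, h.choose_spec.1, h.choose_spec.2.symm⟩
  | one => exact ⟨1, one_mem H, one_pow p⟩
  | mul _ _ _ _ ihx ihy =>
    obtain ⟨x, hx, rfl⟩ := ihx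
    obtain ⟨y, hy, rfl⟩ := ihy
    obtain ⟨z, hz, h⟩ := hmul x hx y hy
    exact ⟨z, hz, h.symm⟩
  | inv _ _ ih =>
    obtain ⟨x, hx, rfl⟩ := ih
    exact ⟨x⁻¹, inv_mem hx, inv_pow x p⟩

theorem pow_eq_one_of_mem_commutator_closure {x y : P}
    (hinj : ∀ g ∈ ⁅Subgroup.closure {x, y}, Subgroup.closure {x, y}⁆,
      ∀ h ∈ ⁅Subgroup.closure {x, y}, Subgroup.closure {x, y}⁆, g ^ p = h ^ p → (g⁻¹ * h) ^ p = 1)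
    (hxy : ⁅x, y⁆ ^ p = 1) {z : P}
    (hz : z ∈ ⁅Subgroup.closure {x, y}, Subgroup.closure {x, y}⁆) : z ^ p = 1 := by
  set K := Subgroup.closure {x, y}
  let T : Subgroup P :=
    { carrier := {g | g ∈ ⁅K, K⁆ ∧ g ^ p = 1}
      mul_mem' := fun {g h} ⟨hg, hgp⟩ ⟨hh, hhp⟩ => ⟨mul_mem hg hh, by
        simpa using hinj g⁻¹ (inv_mem hg) h hh (by rw [inv_pow, hgp, hhp, inv_one])⟩
      one_mem' := ⟨one_mem _, one_pow p⟩
      inv_mem' := fun {g} ⟨hg, hgp⟩ => ⟨inv_mem hg, by rw [inv_pow, hgp, inv_one]⟩ }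
  have hKT : ⁅K, K⁆ ≤ T := by
    refine commutator_closure_pair_le (fun g hg t ht => ⟨?_, ?_⟩) ⟨?_, hxy⟩
    · have htK : t ∈ K := Subgroup.commutator_le_self K ht.1
      exact conj_mem_of_commutator_le le_rfl htK hg ht.1
    · rw [conj_pow, ht.2, mul_one, mul_inv_cancel]
    · exact Subgroup.commutator_mem_commutator (left_mem_closure_pair x y)
        (right_mem_closure_pair x y)
  exact (hKT hz).2

theorem mem_omegaSubgroup_iff {i : ℕ}
    (hmul : ∀ x y : P, x ^ p ^ i = 1 → y ^ p ^ i = 1 → (x * y) ^ p ^ i = 1) {g : P} :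
    g ∈ OmegaSubgroup p P i ↔ g ^ p ^ i = 1 := by
  refine ⟨fun hg => ?_, fun hg => Subgroup.subset_closure hg⟩
  induction hg using Subgroup.closure_induction with
  | mem _ h => exact h
  | one => exact one_pow _
  | mul x y _ _ hx hy => exact hmul x y hx hy
  | inv x _ hx => rw [inv_pow, hx, inv_one]

end Omega

namespace IsRegularPGroup

variable {p : ℕ} {P : Type} [Group P] [Fact p.Prime] [Finite P]

theorem mul_pow_of_commute (hreg : IsRegularPGroup p P) (hP : IsPGroup p P) {u w : P}
    (hinj : ∀ M < Subgroup.closure {w, u}, ∀ g ∈ M, ∀ h ∈ M, g ^ p = h ^ p → (g⁻¹ * h) ^ p = 1)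
    (hcomm : Commute u (w ^ p)) : (w * u) ^ p = w ^ p * u ^ p := by
  set K := Subgroup.closure {w, u}
  have hw : w ∈ K := left_mem_closure_pair w u
  have hu : u ∈ K := right_mem_closure_pair w u
  by_cases hcyc : K ≤ Subgroup.zpowers w
  · exact (commute_of_le_zpowers hcyc hw hu).mul_pow p
  obtain ⟨M, hMK, hwM, hcM⟩ := exists_lt_mem_commutator_le hP hw hcyc
  have hconj : u * w * u⁻¹ ∈ M := conj_mem_of_commutator_le hcM hw hu hwM
  have huw : ⁅u, w⁆ ^ p = 1 := by
    have h := hinj M hMK _ (inv_mem hconj) _ (inv_mem hwM) (by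
      rw [inv_pow, conj_pow, hcomm.mul_inv_cancel, inv_pow])
    rwa [inv_inv] at h
  have hwu : ⁅w, u⁆ ^ p = 1 := by rw [← commutatorElement_inv, inv_pow, huw, inv_one]
  obtain ⟨z, hz, hz'⟩ := hreg w u
  obtain ⟨t, ht, rfl⟩ := exists_pow_eq_of_mem_mhoOne (fun x hx y hy => ⟨1, one_mem _, by
    simp [pow_eq_one_of_mem_commutator_closure (hinj _ (hcM.trans_lt hMK)) hwu hx,
      pow_eq_one_of_mem_commutator_closure (hinj _ (hcM.trans_lt hMK)) hwu hy]⟩) hz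
  rw [hz', pow_eq_one_of_mem_commutator_closure (hinj _ (hcM.trans_lt hMK)) hwu ht, mul_one]

theorem inv_mul_pow_eq_one_of_mem (hreg : IsRegularPGroup p P) (hP : IsPGroup p P)
    (K : Subgroup P) : ∀ x ∈ K, ∀ y ∈ K, x ^ p = y ^ p → (x⁻¹ * y) ^ p = 1 := by
  induction K using WellFoundedLT.induction with
  | ind K ih =>
  intro x hx y hy hxy
  have hcomm : Commute y (x⁻¹ ^ p) := by
    rw [inv_pow, hxy]
    exact (Commute.self_pow y p).inv_right
  rw [hreg.mul_pow_of_commute hP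
    (fun M hM => ih M (hM.trans_le (closure_pair_le (inv_mem hx) hy))) hcomm, inv_pow, hxy,
    inv_mul_cancel]

theorem inv_mul_pow_eq_one_iff (hreg : IsRegularPGroup p P) (hP : IsPGroup p P) {x y : P} :
    (x⁻¹ * y) ^ p = 1 ↔ x ^ p = y ^ p := by
  refine ⟨fun h => ?_, hreg.inv_mul_pow_eq_one_of_mem hP ⊤ x trivial y trivial⟩
  have hyx : (y * x⁻¹) ^ p = 1 := by
    have hconj : y * x⁻¹ = x * (x⁻¹ * y) * x⁻¹ := by group
    rw [hconj, conj_pow, h, mul_one, mul_inv_cancel]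
  have hmul := hreg.mul_pow_of_commute hP (u := x) (w := y * x⁻¹)
    (fun M _ => hreg.inv_mul_pow_eq_one_of_mem hP M) (hyx ▸ Commute.one_right x)
  rwa [inv_mul_cancel_right, hyx, one_mul, eq_comm] at hmul

theorem exists_pow_mul_pow_eq_of_mem (hreg : IsRegularPGroup p P) (hP : IsPGroup p P)
    (K : Subgroup P) : ∀ x ∈ K, ∀ y ∈ K, ∃ z ∈ K, x ^ p * y ^ p = z ^ p := by
  induction K using WellFoundedLT.induction with
  | ind K ih =>
  intro x hx y hy
  by_cases hcyc : K ≤ Subgroup.zpowers (x * y)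
  · exact ⟨x * y, mul_mem hx hy, ((commute_of_le_zpowers hcyc hx hy).mul_pow p).symm⟩
  obtain ⟨M, hMK, hxyM, hcM⟩ := exists_lt_mem_commutator_le hP (mul_mem hx hy) hcyc
  obtain ⟨z, hz, hz'⟩ := hreg x y
  have hle := Subgroup.commutator_mono (closure_pair_le hx hy) (closure_pair_le hx hy)
  obtain ⟨t, ht, rfl⟩ := exists_pow_eq_of_mem_mhoOne (ih _ ((hle.trans hcM).trans_lt hMK)) hz
  obtain ⟨s, hs, hs'⟩ := ih M hMK _ hxyM t (hcM (hle ht))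
  exact ⟨s, hMK.le hs, hz'.trans hs'⟩

theorem exists_pow_eq_of_mem_mhoOne_top (hreg : IsRegularPGroup p P) (hP : IsPGroup p P) {g : P}
    (hg : g ∈ MhoOne p (⊤ : Subgroup P)) : ∃ z, z ^ p = g :=
  let ⟨z, _, hz⟩ := exists_pow_eq_of_mem_mhoOne (hreg.exists_pow_mul_pow_eq_of_mem hP ⊤) hg
  ⟨z, hz⟩

theorem card_omegaSubgroup_one (hreg : IsRegularPGroup p P) (hP : IsPGroup p P) :
    Nat.card (OmegaSubgroup p P 1) = (MhoOne p (⊤ : Subgroup P)).index := by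
  have hmem : ∀ g : P, g ∈ OmegaSubgroup p P 1 ↔ g ^ p = 1 := fun g => by
    rw [mem_omegaSubgroup_iff fun x y hx hy => ?_, pow_one]
    rw [pow_one] at hx hy ⊢
    simpa using (hreg.inv_mul_pow_eq_one_iff hP (x := x⁻¹)).2 (by rw [inv_pow, hx, hy, inv_one])
  let f : P → MhoOne p (⊤ : Subgroup P) := fun g =>
    ⟨g ^ p, Subgroup.subset_closure ⟨g, trivial, rfl⟩⟩
  have hf : Function.Surjective f := fun ⟨_, hg⟩ =>
    (hreg.exists_pow_eq_of_mem_mhoOne_top hP hg).imp fun _ hz => Subtype.ext hz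
  have hker : QuotientGroup.leftRel (OmegaSubgroup p P 1) = Setoid.ker f := by
    ext x y
    rw [QuotientGroup.leftRel_apply, hmem, hreg.inv_mul_pow_eq_one_iff hP, Setoid.ker_def,
      Subtype.ext_iff]
  have hidx : (OmegaSubgroup p P 1).index = Nat.card (MhoOne p (⊤ : Subgroup P)) := by
    rw [Subgroup.index_eq_card]
    exact Nat.card_congr ((Quotient.congrRight fun x y => by rw [hker]).trans
      (Setoid.quotientKerEquivOfSurjective f hf))
  refine Nat.eq_of_mul_eq_mul_right (Nat.card_pos (α := MhoOne p (⊤ : Subgroup P))) ?_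
  rw [← hidx, Subgroup.card_mul_index, hidx, Subgroup.index_mul_card]

end IsRegularPGroup

section Metacyclic

theorem map_mhoOne_top (p : ℕ) {G H : Type} [Group G] [Group H] {f : G →* H}
    (hf : Function.Surjective f) : (MhoOne p (⊤ : Subgroup G)).map f = MhoOne p ⊤ := by
  rw [MhoOne, MonoidHom.map_closure, MhoOne]
  congr 1
  ext y
  constructor
  · rintro ⟨_, ⟨x, -, rfl⟩, rfl⟩
    exact ⟨f x, trivial, map_pow f x p⟩
  · rintro ⟨x, -, rfl⟩
    obtain ⟨g, rfl⟩ := hf x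
    exact ⟨g ^ p, ⟨g, trivial, rfl⟩, map_pow f g p⟩

theorem closure_pair_eq_top_of_quotient {G : Type*} [Group G] [Finite G] {N : Subgroup G}
    [N.Normal] (hN : N ≤ frattini G) {x y : G}
    (h : Subgroup.closure {(x : G ⧸ N), (y : G ⧸ N)} = ⊤) : Subgroup.closure {x, y} = ⊤ := by
  refine frattini_nongenerating (eq_top_iff.2 (le_trans ?_ (sup_le_sup_left hN _)))
  have hmap : (Subgroup.closure {x, y}).map (QuotientGroup.mk' N) = ⊤ := by
    rw [MonoidHom.map_closure, Set.image_pair]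
    exact h
  rw [sup_comm, ← QuotientGroup.comap_map_mk', hmap, Subgroup.comap_top]

theorem commutator_le_zpowers_of_conj_eq {G : Type*} [Group G] [Finite G] {z w m : G} {k : ℤ}
    (hzw : Subgroup.closure {z, w} = ⊤) (hm : m ∈ Subgroup.center G)
    (hconj : w * z * w⁻¹ = z ^ k * m) : commutator G ≤ Subgroup.zpowers ⁅w, z⁆ := by
  have hmc : ∀ g, Commute g m := Subgroup.mem_center_iff.1 hm
  set d := ⁅w, z⁆ with hd
  have hd' : d = z ^ (k - 1) * m := by
    rw [hd, commutatorElement_def, hconj, mul_assoc, ← (hmc z⁻¹).eq, ← mul_assoc, zpow_sub_one]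
  have hzd : z * d * z⁻¹ = d := by
    have h : Commute z d := hd' ▸ ((Commute.refl z).zpow_right _).mul_right (hmc z)
    rw [h.eq, mul_inv_cancel_right]
  have hwd : w * d * w⁻¹ = d ^ k := calc
    w * d * w⁻¹ = (w * z * w⁻¹) ^ (k - 1) * m := by
      rw [hd', conj_zpow, mul_assoc, mul_assoc, ← (hmc w⁻¹).eq]; group
    _ = (z ^ (k - 1) * m) ^ k := by
      rw [hconj, (hmc _).mul_zpow, (hmc _).mul_zpow, mul_assoc, ← zpow_add_one, sub_add_cancel,
        ← zpow_mul, ← zpow_mul, mul_comm k]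
    _ = d ^ k := by rw [hd']
  have hnormal : (Subgroup.zpowers d).Normal := by
    refine zpowers_normal_of_closure_eq_top hzw ?_
    rintro g (rfl | rfl)
    · exact hzd.symm ▸ Subgroup.mem_zpowers d
    · exact hwd.symm ▸ Subgroup.zpow_mem _ (Subgroup.mem_zpowers d) k
  have hle := commutator_closure_pair_le (x := w) (y := z)
    (fun g _ t ht => hnormal.conj_mem t ht g) (Subgroup.mem_zpowers d)
  rwa [Set.pair_comm, hzw] at hle

variable {p : ℕ} [Fact p.Prime] {P : Type} [Group P] [Finite P]

theorem mhoOne_le_frattini (hP : IsPGroup p P) : MhoOne p ⊤ ≤ frattini P := by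
  rw [MhoOne, Subgroup.closure_le]
  rintro _ ⟨x, -, rfl⟩
  exact pow_mem_frattini hP x

theorem exists_conj_mem_zpowers_of_commutator_le (hP : IsPGroup p P)
    (hpow : ∀ g ∈ MhoOne p (⊤ : Subgroup P), ∃ z, z ^ p = g)
    (hidx : (MhoOne p (⊤ : Subgroup P)).index ≤ p ^ 2) {d : P} (hd : d ≠ 1)
    (hcomm : commutator P ≤ Subgroup.zpowers d) :
    ∃ a b : P, Subgroup.closure {a, b} = ⊤ ∧ b * a * b⁻¹ ∈ Subgroup.zpowers a := by
  obtain ⟨u, hdu, hu⟩ := exists_mem_zpowers_forall_ne_pow hP hd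
  have huM : u ∉ MhoOne p (⊤ : Subgroup P) := fun h =>
    let ⟨z, hz⟩ := hpow u h
    hu z hz.symm
  obtain ⟨y, hy⟩ := exists_closure_pair_eq_top hP (mhoOne_le_frattini hP) hidx huM
  exact ⟨u, y, hy, conj_mem_of_commutator_le (hcomm.trans (Subgroup.zpowers_le.2 hdu))
    trivial trivial (Subgroup.mem_zpowers u)⟩

theorem exists_conj_mem_zpowers (hP : IsPGroup p P)
    (hpow : ∀ g ∈ MhoOne p (⊤ : Subgroup P), ∃ z, z ^ p = g)
    (hidx : (MhoOne p (⊤ : Subgroup P)).index ≤ p ^ 2) :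
    ∃ a b : P, Subgroup.closure {a, b} = ⊤ ∧ b * a * b⁻¹ ∈ Subgroup.zpowers a := by
  induction hc : Nat.card P using Nat.strong_induction_on generalizing P with
  | _ c ih =>
  subst hc
  by_cases hbot : commutator P = ⊥
  · by_cases hP1 : ∃ d : P, d ≠ 1
    · obtain ⟨d, hd⟩ := hP1
      exact exists_conj_mem_zpowers_of_commutator_le hP hpow hidx hd (hbot ▸ bot_le)
    · push Not at hP1
      exact ⟨1, 1, eq_top_iff.2 fun g _ => (hP1 g).symm ▸ one_mem _, by simp⟩
  obtain ⟨m₀, hm₀c, hm₀z, hm₀⟩ := exists_mem_center_orderOf_eq hP hbot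
  set N := Subgroup.zpowers m₀
  have hN : N ≤ Subgroup.center P := Subgroup.zpowers_le.2 hm₀z
  have hNn : N.Normal := ⟨fun x hx g => by
    rwa [Subgroup.mem_center_iff.1 (hN hx) g, mul_inv_cancel_right]⟩
  have hNfrat : N ≤ frattini P :=
    Subgroup.zpowers_le.2 (commutator_le_frattini hP hm₀c)
  have hcard : Nat.card (P ⧸ N) < Nat.card P := by
    rw [N.card_eq_card_quotient_mul_card_subgroup, Nat.card_zpowers, hm₀]
    exact lt_mul_of_one_lt_right Nat.card_pos (Fact.out : p.Prime).one_lt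
  have hmap := map_mhoOne_top p (QuotientGroup.mk'_surjective N)
  obtain ⟨a, b, hab, hba⟩ := ih _ hcard (hP.to_quotient N)
    (by
      rw [← hmap]
      rintro _ ⟨g, hg, rfl⟩
      obtain ⟨z, rfl⟩ := hpow g hg
      exact ⟨z, rfl⟩)
    (hmap ▸ (Nat.le_of_dvd (Nat.pos_of_ne_zero Subgroup.FiniteIndex.index_ne_zero)
      (Subgroup.index_map_dvd _ (QuotientGroup.mk'_surjective N))).trans hidx) rfl
  obtain ⟨z, rfl⟩ := QuotientGroup.mk_surjective a
  obtain ⟨w, rfl⟩ := QuotientGroup.mk_surjective b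
  obtain ⟨k, hk⟩ := Subgroup.mem_zpowers_iff.1 hba
  have hm : (z ^ k)⁻¹ * (w * z * w⁻¹) ∈ N := QuotientGroup.eq.1 hk
  have hle := commutator_le_zpowers_of_conj_eq (closure_pair_eq_top_of_quotient hNfrat hab)
    (hN hm) (mul_inv_cancel_left _ _).symm
  refine exists_conj_mem_zpowers_of_commutator_le hP hpow hidx (fun hd => hbot ?_) hle
  rwa [hd, Subgroup.zpowers_one_eq_bot, le_bot_iff] at hle

end Metacyclic

section GeomSum

theorem geom_sum_mul_eq_mul_geom_sum (V : ℤ) (q n : ℕ) :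
    ∑ t ∈ Finset.range (q * n), V ^ t =
      (∑ t ∈ Finset.range q, V ^ t) * ∑ s ∈ Finset.range n, (V ^ q) ^ s := by
  induction n with
  | zero => simp
  | succ n ih =>
    rw [Nat.mul_succ, Finset.sum_range_add, ih, Finset.sum_range_succ, mul_add, ← pow_mul,
      mul_comm _ (V ^ (q * n)), Finset.mul_sum _ _ (V ^ (q * n))]
    simp only [pow_add]

theorem exists_geom_sum_eq_mul {p : ℕ} (hp : Odd p) {d W : ℤ} (hpd : (p : ℤ) ∣ d)
    (hW : d ∣ W - 1) : ∃ ε : ℤ, ∑ s ∈ Finset.range p, W ^ s = p * ε ∧ d ∣ ε - 1 := by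
  obtain ⟨q, rfl⟩ := hp
  obtain ⟨f, rfl⟩ := hpd
  obtain ⟨c, hc⟩ := hW
  choose e he using fun s : ℕ => sq_dvd_add_pow_sub_sub (W - 1) 1 s
  have hpow : ∀ s : ℕ, W ^ s = 1 + (W - 1) * s + (W - 1) ^ 2 * e s := fun s => by
    have h := he s
    rw [one_pow, one_pow, one_mul, add_sub_cancel] at h
    linarith
  have hgauss : ∑ s ∈ Finset.range (2 * q + 1), (s : ℤ) = (2 * q + 1 : ℕ) * q := by
    have h := Finset.sum_range_id_mul_two (2 * q + 1)
    rw [Nat.add_sub_cancel] at h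
    rw [← Nat.cast_sum, ← Nat.cast_mul]
    exact congrArg Nat.cast (by lia : _ = (2 * q + 1) * q)
  refine ⟨1 + (W - 1) * q + (W - 1) * f * c * ∑ s ∈ Finset.range (2 * q + 1), e s, ?_,
    c * q + f * c ^ 2 * ∑ s ∈ Finset.range (2 * q + 1), e s, ?_⟩
  · rw [Finset.sum_congr rfl fun s _ => hpow s]
    simp only [Finset.sum_add_distrib, ← Finset.mul_sum, hgauss, Finset.sum_const,
      Finset.card_range, nsmul_eq_mul]
    linear_combination (W - 1) * (∑ s ∈ Finset.range (2 * q + 1), e s) * hc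
  · rw [hc]
    ring

theorem exists_geom_sum_pow_eq_mul {p : ℕ} (hp : Odd p) {d V : ℤ} (hpd : (p : ℤ) ∣ d)
    (hV : d ∣ V - 1) (i : ℕ) :
    ∃ ε : ℤ, ∑ t ∈ Finset.range (p ^ i), V ^ t = p ^ i * ε ∧ d ∣ ε - 1 := by
  induction i with
  | zero => exact ⟨1, by simp⟩
  | succ i ih =>
    obtain ⟨ε, hε, hεd⟩ := ih
    obtain ⟨δ, hδ, hδd⟩ :=
      exists_geom_sum_eq_mul hp hpd (hV.trans (sub_one_dvd_pow_sub_one V (p ^ i)))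
    refine ⟨ε * δ, ?_, ?_⟩
    · rw [pow_succ, geom_sum_mul_eq_mul_geom_sum, hε, hδ]
      ring
    · rw [show ε * δ - 1 = (ε - 1) * δ + (δ - 1) by ring]
      exact dvd_add (dvd_mul_of_dvd_left hεd δ) hδd

theorem isCoprime_pow_of_dvd_sub_one {p ε : ℤ} (h : p ∣ ε - 1) (s : ℕ) : IsCoprime (p ^ s) ε := by
  obtain ⟨c, hc⟩ := h
  exact IsCoprime.pow_left ⟨-c, 1, by linarith⟩

end GeomSum

section UnitGroup

theorem exists_pow_eq_of_orderOf_eq {G : Type*} [CommGroup G] [IsCyclic G] [Finite G] {x y : G}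
    (h : orderOf x = orderOf y) : ∃ j : ℕ, x ^ j = y ∧ (orderOf x).Coprime j := by
  have hker : ∀ z : G, orderOf z = orderOf x →
      Subgroup.zpowers z = (powMonoidHom (α := G) (orderOf x)).ker := by
    intro z hz
    apply Subgroup.eq_of_le_of_card_ge
    · rw [Subgroup.zpowers_le, MonoidHom.mem_ker, powMonoidHom_apply, ← hz, pow_orderOf_eq_one]
    · rw [IsCyclic.card_powMonoidHom_ker, Nat.card_zpowers, hz]
      exact Nat.gcd_le_right _ (orderOf_pos x)
  obtain ⟨j, rfl⟩ := mem_powers_iff_mem_zpowers.2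
    ((hker x rfl).trans (hker y h.symm).symm ▸ Subgroup.mem_zpowers y)
  refine ⟨j, rfl, ?_⟩
  rw [orderOf_pow, eq_comm] at h
  exact (Nat.div_eq_self.1 h).resolve_left (orderOf_pos x).ne'

theorem orderOf_one_add_pow_mul {p : ℕ} (hp : p.Prime) (hp2 : p ≠ 2) {r : ℕ} (hr : r ≠ 0)
    {c : ℤ} (hc : ¬ (p : ℤ) ∣ c) (n : ℕ) :
    orderOf ((1 + p ^ r * c : ℤ) : ZMod (p ^ (n + r))) = p ^ n := by
  have hp3 : 3 ≤ p := hp.two_le.lt_of_ne' hp2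
  push_cast
  exact ZMod.orderOf_one_add_mul_prime_pow hp r hr (by nlinarith [Nat.pos_of_ne_zero hr]) c hc n

theorem exists_dvd_pow_sub_one_add_pow {p : ℕ} (hp : p.Prime) (hp2 : p ≠ 2) {v : ℤ}
    (hv : (p : ℤ) ∣ v - 1) (m : ℕ) :
    ∃ r j : ℕ, r ≠ 0 ∧ p.Coprime j ∧ (p : ℤ) ^ m ∣ v ^ j - (1 + p ^ r) := by
  by_cases hvm : (p : ℤ) ^ m ∣ v - 1
  · refine ⟨m + 1, 1, m.succ_ne_zero, p.coprime_one_right, ?_⟩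
    rw [pow_one, ← sub_sub]
    exact dvd_sub hvm (pow_dvd_pow _ m.le_succ)
  have hp1 : (p : ℤ).natAbs ≠ 1 := by simpa using hp.ne_one
  have hv1 : v - 1 ≠ 0 := fun h => hvm (h ▸ dvd_zero _)
  obtain ⟨c, hc, hpc⟩ :=
    (Int.finiteMultiplicity_iff.2 ⟨hp1, hv1⟩).exists_eq_pow_mul_and_not_dvd
  set r := multiplicity (p : ℤ) (v - 1)
  have hr : r ≠ 0 := fun h => hpc (by rwa [hc, h, pow_zero, one_mul] at hv)
  have hrm : r ≤ m := le_of_not_ge fun h => hvm (hc ▸ dvd_mul_of_dvd_left (pow_dvd_pow _ h) c)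
  obtain ⟨n, rfl⟩ := Nat.exists_eq_add_of_le' hrm
  have hp1' : ¬ (p : ℤ) ∣ 1 := fun h => hp1 (Int.natAbs_eq_of_dvd_dvd h (one_dvd _))
  have ho := orderOf_one_add_pow_mul hp hp2 hr hpc n
  have ho' := orderOf_one_add_pow_mul hp hp2 hr hp1' n
  have : NeZero (p ^ (n + r)) := ⟨pow_ne_zero _ hp.ne_zero⟩
  have := ZMod.isCyclic_units_of_prime_pow p hp hp2 (n + r)
  have hunit : ∀ x : ZMod (p ^ (n + r)), orderOf x = p ^ n → IsUnit x := fun x hx =>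
    IsUnit.of_pow_eq_one (hx ▸ pow_orderOf_eq_one x) (pow_ne_zero n hp.ne_zero)
  obtain ⟨x, hx⟩ := hunit _ ho
  obtain ⟨y, hy⟩ := hunit _ ho'
  rw [← hx, orderOf_units] at ho
  rw [← hy, orderOf_units] at ho'
  obtain ⟨j, hj, hcop⟩ := exists_pow_eq_of_orderOf_eq (ho.trans ho'.symm)
  have hn : n ≠ 0 := by
    rintro rfl
    exact hvm (hc ▸ dvd_mul_of_dvd_left (by rw [zero_add]) c)
  refine ⟨r, j, hr, (Nat.coprime_pow_left_iff (Nat.pos_of_ne_zero hn) _ _).1 (ho ▸ hcop), ?_⟩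
  rw [← Nat.cast_pow, ← ZMod.intCast_eq_intCast_iff_dvd_sub]
  rw [sub_eq_iff_eq_add'.1 hc]
  rw [Int.cast_pow, ← hx, ← Units.val_pow_eq_pow_val, hj, hy, mul_one]

end UnitGroup

section ClassTwo

theorem mul_pow_of_commute_commutatorElement {G : Type*} [Group G] {x y : G}
    (hx : Commute ⁅y, x⁆ x) (hy : Commute ⁅y, x⁆ y) (n : ℕ) :
    (x * y) ^ n = ⁅y, x⁆ ^ n.choose 2 * (x ^ n * y ^ n) := by
  have hswap : ∀ n : ℕ, y ^ n * x = ⁅y, x⁆ ^ n * (x * y ^ n) := by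
    intro n
    induction n with
    | zero => simp
    | succ n ih => calc
      y ^ (n + 1) * x = y ^ n * ⁅y, x⁆ * (x * y) := by rw [pow_succ, commutatorElement_def]; group
      _ = ⁅y, x⁆ * (y ^ n * x) * y := by rw [← (hy.pow_right n).eq]; simp only [mul_assoc]
      _ = ⁅y, x⁆ ^ (n + 1) * (x * y ^ (n + 1)) := by
        rw [ih, pow_succ', pow_succ]; simp only [mul_assoc]
  induction n with
  | zero => simp
  | succ n ih => calc
    (x * y) ^ (n + 1) = ⁅y, x⁆ ^ n.choose 2 * (x ^ n * (y ^ n * x) * y) := by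
      rw [pow_succ, ih]; simp only [mul_assoc]
    _ = ⁅y, x⁆ ^ n.choose 2 * (x ^ n * ⁅y, x⁆ ^ n * (x * y ^ n) * y) := by
      rw [hswap]; simp only [mul_assoc]
    _ = ⁅y, x⁆ ^ (n + 1).choose 2 * (x ^ (n + 1) * y ^ (n + 1)) := by
      rw [← ((hx.pow_left n).pow_right n).eq, Nat.choose_succ_succ' n 1, Nat.choose_one_right,
        add_comm n, pow_add, pow_succ x, pow_succ y]
      simp only [mul_assoc]

theorem inv_mul_pow_mem_of_commutatorElement_mem {G : Type*} [Group G] {p : ℕ} (hp : Odd p)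
    {N : Subgroup G} [N.Normal] {x y : G} (hc : ⁅y, x⁆ ^ p ∈ N) (hx : ⁅⁅y, x⁆, x⁆ ∈ N)
    (hy : ⁅⁅y, x⁆, y⁆ ∈ N) : ((x * y) ^ p)⁻¹ * (x ^ p * y ^ p) ∈ N := by
  have hcomm : ∀ g, ⁅⁅y, x⁆, g⁆ ∈ N → Commute ⁅(y : G ⧸ N), (x : G ⧸ N)⁆ (g : G ⧸ N) :=
    fun g hg => commutatorElement_eq_one_iff_commute.1 ((QuotientGroup.eq_one_iff _).2 hg)
  have hp' : ⁅(y : G ⧸ N), (x : G ⧸ N)⁆ ^ p = 1 := (QuotientGroup.eq_one_iff _).2 hc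
  obtain ⟨q, hq⟩ : p ∣ p.choose 2 := by
    obtain ⟨q, rfl⟩ := hp
    exact ⟨q, by rw [Nat.choose_two_right, Nat.add_sub_cancel, mul_left_comm,
      Nat.mul_div_cancel_left _ two_pos]⟩
  have h := mul_pow_of_commute_commutatorElement (hcomm x hx) (hcomm y hy) p
  rw [hq, pow_mul, hp', one_pow, one_mul] at h
  exact QuotientGroup.eq.1 h

end ClassTwo

/-- Generators `a`, `b` of a group in which `b` acts on the cyclic subgroup `⟨a⟩` by `a ↦ a ^ v`. -/
structure MetacyclicPair {G : Type*} [Group G] (v : ℤ) (a b : G) : Prop where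
  closure_eq_top : Subgroup.closure {a, b} = ⊤
  conj_eq : b * a * b⁻¹ = a ^ v

namespace MetacyclicPair

variable {G : Type*} [Group G] {v : ℤ} {a b : G}

theorem pow_mul_zpow (h : MetacyclicPair v a b) (X : ℤ) (Y : ℕ) :
    b ^ Y * a ^ X = a ^ (v ^ Y * X) * b ^ Y := by
  induction Y generalizing X with
  | zero => simp
  | succ Y ih =>
    have hb : b * a ^ X = a ^ (v * X) * b := by
      rw [← mul_inv_eq_iff_eq_mul, ← conj_zpow, h.conj_eq, zpow_mul]
    rw [pow_succ, mul_assoc, hb, ← mul_assoc, ih, mul_assoc, pow_succ, mul_assoc (v ^ Y)]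

theorem mul_eq (h : MetacyclicPair v a b) (X X' : ℤ) (Y Y' : ℕ) :
    a ^ X * b ^ Y * (a ^ X' * b ^ Y') = a ^ (X + v ^ Y * X') * b ^ (Y + Y') := by
  rw [mul_assoc, ← mul_assoc (b ^ Y), h.pow_mul_zpow, zpow_add, pow_add]
  simp only [mul_assoc]

theorem pow_eq (h : MetacyclicPair v a b) (X : ℤ) (Y q : ℕ) :
    (a ^ X * b ^ Y) ^ q = a ^ (X * ∑ i ∈ Finset.range q, (v ^ Y) ^ i) * b ^ (Y * q) := by
  induction q with
  | zero => simp
  | succ q ih =>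
    rw [pow_succ, ih, h.mul_eq, Finset.sum_range_succ, mul_add, Nat.mul_succ, ← pow_mul,
      mul_comm X (v ^ _)]

variable [Finite G]

theorem normal_zpowers (h : MetacyclicPair v a b) (n : ℤ) :
    (Subgroup.zpowers (a ^ n)).Normal := by
  refine zpowers_normal_of_closure_eq_top h.closure_eq_top ?_
  rintro g (rfl | rfl)
  · rw [← conj_zpow, mul_inv_cancel_right]
    exact Subgroup.mem_zpowers _
  · rw [← conj_zpow, h.conj_eq, ← zpow_mul, mul_comm, zpow_mul]
    exact Subgroup.zpow_mem _ (Subgroup.mem_zpowers _) v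

theorem exists_eq (h : MetacyclicPair v a b) (g : G) : ∃ (X : ℤ) (Y : ℕ), a ^ X * b ^ Y = g := by
  have hn : (Subgroup.zpowers a).Normal := zpow_one a ▸ h.normal_zpowers 1
  have hg : g ∈ Subgroup.zpowers a ⊔ Subgroup.zpowers b := by
    rw [Subgroup.zpowers_eq_closure, Subgroup.zpowers_eq_closure, ← Subgroup.closure_union,
      ← Set.insert_eq, h.closure_eq_top]
    trivial
  obtain ⟨x, hx, y, hy, rfl⟩ := Subgroup.mem_sup_of_normal_left.1 hg
  obtain ⟨X, rfl⟩ := Subgroup.mem_zpowers_iff.1 hx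
  obtain ⟨Y, rfl⟩ := mem_powers_iff_mem_zpowers.2 hy
  exact ⟨X, Y, rfl⟩

theorem commutator_eq (h : MetacyclicPair v a b) :
    commutator G = Subgroup.zpowers (a ^ (v - 1)) := by
  have hba : ⁅b, a⁆ = a ^ (v - 1) := by rw [commutatorElement_def, h.conj_eq, zpow_sub_one]
  refine le_antisymm ?_
    (Subgroup.zpowers_le.2 (hba ▸ Subgroup.commutator_mem_commutator trivial trivial))
  have hle := commutator_closure_pair_le (x := b) (y := a)
    (fun g _ t ht => (h.normal_zpowers (v - 1)).conj_mem t ht g) (hba ▸ Subgroup.mem_zpowers _)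
  rwa [Set.pair_comm, h.closure_eq_top] at hle

theorem exists_conj_eq_zpow (h : MetacyclicPair v a b) {p : ℤ} (hv : p ∣ v - 1) (g : G) :
    ∃ w : ℤ, p ∣ w - 1 ∧ ∀ z ∈ Subgroup.zpowers a, g * z * g⁻¹ = z ^ w := by
  obtain ⟨X, Y, rfl⟩ := h.exists_eq g
  refine ⟨v ^ Y, hv.trans (sub_one_dvd_pow_sub_one v Y), fun z hz => ?_⟩
  obtain ⟨Z, rfl⟩ := Subgroup.mem_zpowers_iff.1 hz
  rw [mul_assoc (a ^ X), h.pow_mul_zpow, ← zpow_mul, mul_comm Z]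
  group

theorem isRegularPGroup {p : ℕ} {P : Type} [Group P] [Finite P] {a b : P} (hp : Odd p)
    (h : MetacyclicPair v a b) (hv : (p : ℤ) ∣ v - 1) : IsRegularPGroup p P := by
  intro x y
  set D := ⁅Subgroup.closure {x, y}, Subgroup.closure {x, y}⁆
  have hDa : D ≤ Subgroup.zpowers a := calc
    D ≤ commutator P := Subgroup.commutator_mono le_top le_top
    _ ≤ Subgroup.zpowers a := h.commutator_eq.trans_le
      (Subgroup.zpowers_le.2 (Subgroup.zpow_mem _ (Subgroup.mem_zpowers a) _))
  have hpD : ∀ z ∈ D, z ^ p ∈ MhoOne p D := fun z hz => Subgroup.subset_closure ⟨z, hz, rfl⟩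
  have hND : MhoOne p D ≤ D := by
    rw [MhoOne, Subgroup.closure_le]
    rintro _ ⟨z, hz, rfl⟩
    exact D.pow_mem hz p
  have hN : (MhoOne p D).Normal := ⟨fun z hz g => by
    obtain ⟨w, -, hw⟩ := h.exists_conj_eq_zpow hv g
    exact hw z (hDa (hND hz)) ▸ Subgroup.zpow_mem _ hz w⟩
  have hc : ⁅y, x⁆ ∈ D := Subgroup.commutator_mem_commutator (right_mem_closure_pair x y)
    (left_mem_closure_pair x y)
  have hcentral : ∀ g, ⁅⁅y, x⁆, g⁆ ∈ MhoOne p D := fun g => by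
    obtain ⟨w, ⟨t, ht⟩, hw⟩ := h.exists_conj_eq_zpow hv g
    rw [← commutatorElement_inv, commutatorElement_def, hw _ (hDa hc), ← zpow_sub_one, ht, zpow_mul,
      zpow_natCast]
    exact inv_mem (Subgroup.zpow_mem _ (hpD _ hc) t)
  exact ⟨_, inv_mul_pow_mem_of_commutatorElement_mem hp (hpD _ hc) (hcentral x) (hcentral y),
    (mul_inv_cancel_left _ _).symm⟩

end MetacyclicPair

section TypeInvariants

variable {p : ℕ} {P : Type} [Group P]

theorem omegaSubgroup_mono : Monotone (OmegaSubgroup p P) := fun i j hij =>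
  Subgroup.closure_mono fun x (hx : x ^ p ^ i = 1) => show x ^ p ^ j = 1 by
    rw [← Nat.add_sub_cancel' hij, pow_add, pow_mul, hx, one_pow]

theorem omegaInv_eq_of_card (hp : p.Prime) {f : ℕ → ℕ}
    (hcard : ∀ i, Nat.card (OmegaSubgroup p P i) = p ^ f i) (i : ℕ) :
    omegaInv p P i = f i - f (i - 1) := by
  have h := Subgroup.relIndex_mul_relIndex ⊥ _ _ bot_le
    (omegaSubgroup_mono (p := p) (P := P) (Nat.sub_le i 1))
  rw [Subgroup.relIndex_bot_left, Subgroup.relIndex_bot_left, hcard, hcard] at h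
  have hle : f (i - 1) ≤ f i := (Nat.pow_dvd_pow_iff_le_right hp.one_lt).1 ⟨_, h.symm⟩
  rw [omegaInv, Nat.eq_div_of_mul_eq_right (pow_ne_zero _ hp.ne_zero) h,
    Nat.pow_div hle hp.pos, hp.factorization_pow, Finsupp.single_eq_same]

theorem muInv_eq_of_forall {j s : ℕ} (h : ∀ i, 1 ≤ i → (j ≤ omegaInv p P i ↔ i ≤ s)) :
    muInv p P j = s := by
  rw [muInv, Nat.card_congr (Equiv.subtypeEquivRight (q := (· ∈ Finset.Icc 1 s)) fun i => by
    rw [Finset.mem_Icc]; exact and_congr_right (h i)),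
    Nat.card_eq_fintype_card, Fintype.card_coe, Nat.card_Icc, Nat.add_sub_cancel]

theorem hasTypeInvariants_pair_of_card (hp : p.Prime) {l e : ℕ} (hle : l ≤ e)
    (hcard : ∀ i, Nat.card (OmegaSubgroup p P i) = p ^ (min i l + min i e)) :
    HasTypeInvariants p P [e, l] := by
  have hmu : ∀ {j s : ℕ}, (∀ i, 1 ≤ i →
      (j ≤ min i l + min i e - (min (i - 1) l + min (i - 1) e) ↔ i ≤ s)) → muInv p P j = s :=
    fun h => muInv_eq_of_forall fun i hi => by rw [omegaInv_eq_of_card hp hcard]; exact h i hi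
  rintro (_ | _ | j)
  · exact hmu (s := e) fun i hi => by omega
  · exact hmu (s := l) fun i hi => by omega
  · exact hmu (s := 0) fun i hi => by omega

theorem HasTypeInvariants.card_omegaSubgroup_one_le [hp : Fact p.Prime] [Finite P]
    (hP : IsPGroup p P) {L : List ℕ} (h : HasTypeInvariants p P L) :
    Nat.card (OmegaSubgroup p P 1) ≤ p ^ L.length := by
  obtain ⟨n, hn⟩ := IsPGroup.iff_card.1 hP
  have htop : ∀ j, n ≤ j → OmegaSubgroup p P j = ⊤ := fun j hj => by
    refine eq_top_iff.2 fun x _ => Subgroup.subset_closure ?_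
    rw [Set.mem_ofPred_eq, ← Nat.add_sub_cancel' hj, pow_add, pow_mul, ← hn, pow_card_eq_one',
      one_pow]
  have hzero : OmegaSubgroup p P (1 - 1) = ⊥ := by simp [OmegaSubgroup]
  have hfin : Finite {i : ℕ // 1 ≤ i ∧ L.length + 1 ≤ omegaInv p P i} := by
    refine (Set.finite_le_nat n).subset fun i hi => not_lt.1 fun (hni : n < i) => ?_
    have hi := hi.2
    rw [omegaInv, htop _ (Nat.le_sub_one_of_lt hni), htop _ hni.le, Subgroup.relIndex_self,
      Nat.factorization_one] at hi
    exact absurd hi (Nat.not_succ_le_zero _)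
  obtain ⟨d, hd⟩ := IsPGroup.iff_card.1 (hP.to_subgroup (OmegaSubgroup p P 1))
  have homega : omegaInv p P 1 = d := by
    rw [omegaInv, hzero, Subgroup.relIndex_bot_left, hd, hp.out.factorization_pow,
      Finsupp.single_eq_same]
  rw [hd]
  refine Nat.pow_le_pow_right hp.out.pos (not_lt.1 fun hlt => ?_)
  have hmu : muInv p P (L.length + 1) = 0 := by
    rw [h, List.getD_eq_default _ _ le_rfl]
  have : Nonempty {i : ℕ // 1 ≤ i ∧ L.length + 1 ≤ omegaInv p P i} := ⟨⟨1, le_rfl, homega ▸ hlt⟩⟩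
  exact Nat.card_pos.ne' hmu

end TypeInvariants

/-- The presentation `⟨a, b | a ^ p ^ m = 1, b ^ p ^ k = a ^ p ^ l, b * a * b⁻¹ = a ^ (1 + p ^ r)⟩`
of a metacyclic group of order `p ^ (m + k)`. The inequalities say that `⟨a⟩` is no larger than
needed to split off `b`, and that `a ^ p ^ l` is fixed by the action of `b`. -/
structure StandardPair (p m k l r : ℕ) {G : Type*} [Group G] (a b : G) : Prop
    extends MetacyclicPair (1 + (p : ℤ) ^ r) a b where
  card_eq : Nat.card G = p ^ (m + k)
  pow_left : a ^ p ^ m = 1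
  pow_right : b ^ p ^ k = a ^ p ^ l
  r_ne_zero : r ≠ 0
  l_le_k : l ≤ k
  l_le_m : l ≤ m
  m_le : m ≤ l + r

namespace StandardPair

variable {p m k l r : ℕ} {G : Type*} [Group G] {a b : G}

theorem zpow_left (h : StandardPair p m k l r a b) : a ^ (p : ℤ) ^ m = 1 := by
  rw [← Nat.cast_pow, zpow_natCast, h.pow_left]

theorem zpow_right (h : StandardPair p m k l r a b) : b ^ (p : ℤ) ^ k = a ^ (p : ℤ) ^ l := by
  rw [← Nat.cast_pow, ← Nat.cast_pow, zpow_natCast, zpow_natCast, h.pow_right]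

theorem zpow_mul_zpow_eq_of_dvd (h : StandardPair p m k l r a b) {X X' Y Y' : ℤ}
    (hX : (p : ℤ) ^ l ∣ X - X')
    (hY : (p : ℤ) ^ (k + m - l) ∣ Y - Y' + p ^ (k - l) * (X - X')) :
    a ^ X * b ^ Y = a ^ X' * b ^ Y' := by
  obtain ⟨x, hx⟩ := hX
  obtain ⟨y, hy⟩ := hY
  have hk : (p : ℤ) ^ k = p ^ (k - l) * p ^ l := by rw [← pow_add, Nat.sub_add_cancel h.l_le_k]
  have hb : b ^ (p : ℤ) ^ (k + m - l) = 1 := by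
    rw [Nat.add_sub_assoc h.l_le_m, pow_add, zpow_mul, h.zpow_right, ← zpow_mul, ← pow_add,
      Nat.add_sub_cancel' h.l_le_m, h.zpow_left]
  have hX' : X = X' + p ^ l * x := by linarith
  have hY' : Y = p ^ (k + m - l) * y + (-(p ^ k * x) + Y') := by
    rw [hk]; linear_combination hy - p ^ (k - l) * hx
  rw [hX', hY', zpow_add, zpow_mul, ← h.zpow_right, zpow_add, zpow_add, zpow_mul, hb, one_zpow,
    one_mul, ← zpow_mul, zpow_neg, mul_assoc, mul_inv_cancel_left]

theorem map {G' : Type*} [Group G'] (h : StandardPair p m k l r a b) (φ : G ≃* G') :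
    StandardPair p m k l r (φ a) (φ b) where
  closure_eq_top := by
    rw [← Set.image_pair, ← MulEquiv.coe_toMonoidHom, ← MonoidHom.map_closure, h.closure_eq_top]
    exact Subgroup.map_top_of_surjective _ φ.surjective
  conj_eq := by rw [← map_inv, ← map_mul, ← map_mul, h.conj_eq, map_zpow]
  card_eq := (Nat.card_congr φ.toEquiv).symm.trans h.card_eq
  pow_left := by rw [← map_pow, h.pow_left, map_one]
  pow_right := by rw [← map_pow, ← map_pow, h.pow_right]
  r_ne_zero := h.r_ne_zero
  l_le_k := h.l_le_k
  l_le_m := h.l_le_m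
  m_le := h.m_le

variable [hp : Fact p.Prime]

theorem finite (h : StandardPair p m k l r a b) : Finite G :=
  Nat.finite_of_card_ne_zero (h.card_eq ▸ pow_ne_zero _ hp.out.ne_zero)

/- Shifting the exponent of `b` by `p ^ (k - l) * X` diagonalises the relation
`b ^ p ^ k = a ^ p ^ l`. -/
theorem exists_equiv (h : StandardPair p m k l r a b) :
    ∃ f : ZMod (p ^ l) × ZMod (p ^ (k + m - l)) ≃ G, ∀ X Y : ℤ,
      f (X, ((Y + p ^ (k - l) * X : ℤ) : ZMod (p ^ (k + m - l)))) = a ^ X * b ^ Y := by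
  have := h.finite
  have hne : ∀ n, NeZero (p ^ n) := fun n => ⟨pow_ne_zero n hp.out.ne_zero⟩
  have hval : ∀ (n : ℕ) (Z : ℤ), (p : ℤ) ^ n ∣ (Z : ZMod (p ^ n)).val - Z := fun n Z => by
    rw [← Nat.cast_pow, ← ZMod.intCast_zmod_eq_zero_iff_dvd]; simp
  let f : ZMod (p ^ l) × ZMod (p ^ (k + m - l)) → G := fun s =>
    a ^ (s.1.val : ℤ) * b ^ ((s.2.val : ℤ) - p ^ (k - l) * s.1.val)
  have hf : ∀ X Y : ℤ, f (X, ((Y + p ^ (k - l) * X : ℤ) : ZMod (p ^ (k + m - l)))) =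
      a ^ X * b ^ Y := fun X Y => by
    refine h.zpow_mul_zpow_eq_of_dvd (hval l X) ((hval _ (Y + p ^ (k - l) * X)).trans
      (dvd_of_eq ?_))
    ring
  have hsurj : Function.Surjective f := fun g => by
    obtain ⟨X, Y, rfl⟩ := h.exists_eq g
    exact ⟨_, (hf X Y).trans (by rw [zpow_natCast])⟩
  have hcard : Nat.card (ZMod (p ^ l) × ZMod (p ^ (k + m - l))) = Nat.card G := by
    rw [Nat.card_prod, Nat.card_zmod, Nat.card_zmod, h.card_eq, ← pow_add,
      Nat.add_sub_cancel' (h.l_le_k.trans (Nat.le_add_right k m)), add_comm]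
  exact ⟨Equiv.ofBijective f ((Nat.bijective_iff_surjective_and_card f).2 ⟨hsurj, hcard⟩), hf⟩

theorem zpow_mul_zpow_eq_one_iff (h : StandardPair p m k l r a b) (X Y : ℤ) :
    a ^ X * b ^ Y = 1 ↔
      (p : ℤ) ^ l ∣ X ∧ (p : ℤ) ^ (k + m - l) ∣ Y + p ^ (k - l) * X := by
  obtain ⟨f, hf⟩ := h.exists_equiv
  have h1 := hf 0 0
  rw [zpow_zero, zpow_zero, mul_one] at h1
  rw [← hf, ← h1, f.apply_eq_iff_eq, Prod.mk.injEq]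
  simp only [Int.cast_zero, mul_zero, add_zero, ZMod.intCast_zmod_eq_zero_iff_dvd, Nat.cast_pow]

theorem nonempty_mulEquiv {G' : Type*} [Group G'] {a' b' : G'} (h : StandardPair p m k l r a b)
    (h' : StandardPair p m k l r a' b') : Nonempty (G ≃* G') := by
  have := h.finite
  obtain ⟨f, hf⟩ := h.exists_equiv
  obtain ⟨f', hf'⟩ := h'.exists_equiv
  have hmap : ∀ (X : ℤ) (Y : ℕ), (f.symm.trans f') (a ^ X * b ^ Y) = a' ^ X * b' ^ Y :=
    fun X Y => by
      rw [← zpow_natCast, ← zpow_natCast, ← hf, ← hf', Equiv.trans_apply, f.symm_apply_apply]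
  refine ⟨MulEquiv.mk' (f.symm.trans f') fun x y => ?_⟩
  obtain ⟨X, Y, rfl⟩ := h.exists_eq x
  obtain ⟨X', Y', rfl⟩ := h.exists_eq y
  rw [h.mul_eq, hmap, hmap, hmap, h'.mul_eq]

end StandardPair

theorem card_zmod_pow_mul_eq_zero {p : ℕ} (hp : p.Prime) (i s : ℕ) :
    Nat.card {x : ZMod (p ^ s) // (p : ZMod (p ^ s)) ^ i * x = 0} = p ^ min i s := by
  have : NeZero (p ^ s) := ⟨pow_ne_zero _ hp.ne_zero⟩
  have hker := IsAddCyclic.card_nsmulAddMonoidHom_ker (G := ZMod (p ^ s)) (p ^ i)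
  have hgcd : (p ^ s).gcd (p ^ i) = p ^ min i s := by
    rcases le_total i s with h | h
    · rw [min_eq_left h, Nat.gcd_eq_right (pow_dvd_pow p h)]
    · rw [min_eq_right h, Nat.gcd_eq_left (pow_dvd_pow p h)]
  rw [Nat.card_zmod, hgcd] at hker
  rw [← hker]
  refine Nat.card_congr (Equiv.subtypeEquivRight fun x => ?_)
  rw [AddMonoidHom.mem_ker, nsmulAddMonoidHom_apply, nsmul_eq_mul, Nat.cast_pow]

theorem dvd_one_add_pow_sub_one (d : ℤ) (n : ℕ) : d ∣ (1 + d) ^ n - 1 := by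
  simpa using sub_one_dvd_pow_sub_one (1 + d) n

namespace StandardPair

variable {p m k l r : ℕ}

section Torsion

variable {G : Type*} [Group G] {a b : G}

theorem dvd_mul_mul (h : StandardPair p m k l r a b) {A B : ℤ} (hA : (p : ℤ) ^ l ∣ A)
    (hB : (p : ℤ) ^ r ∣ B) : (p : ℤ) ^ (k + m - l) ∣ p ^ (k - l) * (A * B) := calc
  (p : ℤ) ^ (k + m - l) ∣ p ^ (k - l + (l + r)) := pow_dvd_pow _ (by
    have := h.l_le_k; have := h.m_le; omega)
  _ ∣ p ^ (k - l) * (A * B) := by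
    rw [pow_add, pow_add]
    exact mul_dvd_mul_left _ (mul_dvd_mul hA hB)

variable [hp : Fact p.Prime]

theorem pow_eq_one_iff (hodd : Odd p) (h : StandardPair p m k l r a b) (X : ℤ) (Y i : ℕ) :
    (a ^ X * b ^ Y) ^ p ^ i = 1 ↔
      (p : ℤ) ^ l ∣ p ^ i * X ∧ (p : ℤ) ^ (k + m - l) ∣ p ^ i * (Y + p ^ (k - l) * X) := by
  have hpr : (p : ℤ) ∣ p ^ r := dvd_pow_self _ h.r_ne_zero
  obtain ⟨ε, hsum, hε⟩ := exists_geom_sum_pow_eq_mul hodd hpr (dvd_one_add_pow_sub_one _ Y) i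
  have hl : (p : ℤ) ^ l ∣ X * (p ^ i * ε) ↔ (p : ℤ) ^ l ∣ p ^ i * X := by
    rw [mul_left_comm, ← mul_assoc]
    exact ⟨(isCoprime_pow_of_dvd_sub_one (hpr.trans hε) l).dvd_of_dvd_mul_right,
      fun hd => hd.mul_right ε⟩
  rw [h.pow_eq, hsum, ← zpow_natCast b, h.zpow_mul_zpow_eq_one_iff, hl]
  refine and_congr_right fun hX => ?_
  have hshift : ((Y * p ^ i : ℕ) : ℤ) + p ^ (k - l) * (X * (p ^ i * ε)) =
      p ^ i * (Y + p ^ (k - l) * X) + p ^ (k - l) * (p ^ i * X * (ε - 1)) := by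
    push_cast; ring
  rw [hshift]
  exact dvd_add_left (h.dvd_mul_mul hX hε)

theorem mul_pow_eq_one (hodd : Odd p) (h : StandardPair p m k l r a b) {i : ℕ} (g g' : G)
    (hg : g ^ p ^ i = 1) (hg' : g' ^ p ^ i = 1) : (g * g') ^ p ^ i = 1 := by
  have := h.finite
  obtain ⟨X, Y, rfl⟩ := h.exists_eq g
  obtain ⟨X', Y', rfl⟩ := h.exists_eq g'
  rw [h.pow_eq_one_iff hodd] at hg hg'
  rw [h.mul_eq, h.pow_eq_one_iff hodd]
  have hX : (p : ℤ) ^ i * (X + (1 + (p : ℤ) ^ r) ^ Y * X') =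
      p ^ i * X + (1 + (p : ℤ) ^ r) ^ Y * (p ^ i * X') := by ring
  have hY : (p : ℤ) ^ i * ((Y + Y' : ℕ) + p ^ (k - l) * (X + (1 + (p : ℤ) ^ r) ^ Y * X')) =
      p ^ i * (Y + p ^ (k - l) * X) + p ^ i * (Y' + p ^ (k - l) * X') +
        p ^ (k - l) * (p ^ i * X' * ((1 + (p : ℤ) ^ r) ^ Y - 1)) := by push_cast; ring
  rw [hX, hY]
  exact ⟨dvd_add hg.1 (hg'.1.mul_left _),
    dvd_add (dvd_add hg.2 hg'.2) (h.dvd_mul_mul hg'.1 (dvd_one_add_pow_sub_one _ Y))⟩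

end Torsion

section OmegaSubgroups

variable [hp : Fact p.Prime] {P : Type} [Group P] {a b : P}

theorem card_omegaSubgroup (hodd : Odd p) (h : StandardPair p m k l r a b) (i : ℕ) :
    Nat.card (OmegaSubgroup p P i) = p ^ (min i l + min i (k + m - l)) := by
  have := h.finite
  obtain ⟨f, hf⟩ := h.exists_equiv
  rw [pow_add, ← card_zmod_pow_mul_eq_zero hp.out, ← card_zmod_pow_mul_eq_zero hp.out,
    ← Nat.card_prod]
  refine (Nat.card_congr (Equiv.subtypeProdEquivProd.symm.trans (f.subtypeEquiv fun s => ?_))).symm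
  obtain ⟨X, Y, hXY⟩ := h.exists_eq (f s)
  have hs : ((X : ZMod (p ^ l)), ((Y + p ^ (k - l) * X : ℤ) : ZMod (p ^ (k + m - l)))) = s :=
    f.injective (by rw [← hXY, hf, zpow_natCast])
  rw [mem_omegaSubgroup_iff (h.mul_pow_eq_one hodd), ← hXY, h.pow_eq_one_iff hodd, ← hs]
  have e1 := ZMod.intCast_zmod_eq_zero_iff_dvd (p ^ i * X) (p ^ l)
  have e2 := ZMod.intCast_zmod_eq_zero_iff_dvd (p ^ i * (Y + p ^ (k - l) * X)) (p ^ (k + m - l))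
  push_cast at e1 e2 ⊢
  rw [e1, e2]

theorem hasTypeInvariants (hodd : Odd p) (h : StandardPair p m k l r a b) :
    HasTypeInvariants p P [k + m - l, l] :=
  hasTypeInvariants_pair_of_card hp.out (by have := h.l_le_k; have := h.l_le_m; omega)
    (h.card_omegaSubgroup hodd)

theorem isRegularPGroup (hodd : Odd p) (h : StandardPair p m k l r a b) : IsRegularPGroup p P :=
  have := h.finite
  h.toMetacyclicPair.isRegularPGroup hodd
    ((dvd_pow_self _ h.r_ne_zero).trans (dvd_of_eq (add_sub_cancel_left 1 _).symm))

end OmegaSubgroups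

end StandardPair

namespace StandardPair

variable {p m k l r : ℕ} {G : Type*} [Group G] {a b : G}

theorem commutator_eq_zpowers_pow [Finite G] (h : StandardPair p m k l r a b) :
    commutator G = Subgroup.zpowers (a ^ p ^ r) := by
  rw [h.commutator_eq, add_sub_cancel_left, ← Nat.cast_pow, zpow_natCast]

variable [hp : Fact p.Prime]

theorem orderOf_left (h : StandardPair p m k l r a b) : orderOf a = p ^ m := by
  refine Nat.dvd_antisymm (orderOf_dvd_of_pow_eq_one h.pow_left) ?_
  have hdvd := ((h.zpow_mul_zpow_eq_one_iff (orderOf a) 0).1 (by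
    rw [zpow_natCast, pow_orderOf_eq_one, zpow_zero, mul_one])).2
  rw [zero_add, Nat.sub_add_comm h.l_le_k, pow_add] at hdvd
  exact_mod_cast Int.dvd_of_mul_dvd_mul_left (pow_ne_zero _ (mod_cast hp.out.ne_zero)) hdvd

theorem pow_dvd_of_pow_right_mem_zpowers (h : StandardPair p m k l r a b) {n : ℕ}
    (hn : b ^ n ∈ Subgroup.zpowers a) : p ^ k ∣ n := by
  obtain ⟨z, hz⟩ := Subgroup.mem_zpowers_iff.1 hn
  obtain ⟨hl, hk⟩ := (h.zpow_mul_zpow_eq_one_iff (-z) n).1 (by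
    rw [zpow_natCast, ← hz, zpow_neg, inv_mul_cancel])
  have hkz : (p : ℤ) ^ k ∣ p ^ (k - l) * -z := by
    rw [← Nat.sub_add_cancel h.l_le_k, pow_add, Nat.add_sub_cancel]
    exact mul_dvd_mul_left _ hl
  have hkn := (pow_dvd_pow (p : ℤ) (Nat.add_sub_assoc h.l_le_m k ▸ Nat.le_add_right k _)).trans hk
  exact_mod_cast (dvd_add_left hkz).1 hkn

theorem card_abelianization (h : StandardPair p m k l r a b) (hrl : r ≤ l) :
    Nat.card (Abelianization G) = p ^ (k + r) := by
  have := h.finite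
  have hrm := hrl.trans h.l_le_m
  have hcomm : Nat.card (commutator G) = p ^ (m - r) := by
    rw [h.commutator_eq_zpowers_pow, Nat.card_zpowers, orderOf_pow, h.orderOf_left,
      Nat.gcd_eq_right (pow_dvd_pow p hrm), Nat.pow_div hrm hp.out.pos]
  refine Nat.eq_of_mul_eq_mul_right (pow_pos hp.out.pos (m - r)) ?_
  rw [← pow_add, add_assoc, Nat.add_sub_cancel' hrm, add_comm k, ← h.card_eq, ← hcomm]
  exact (Subgroup.card_eq_card_quotient_mul_card_subgroup _).symm

theorem exponent_abelianization (h : StandardPair p m k l r a b) (hrl : r ≤ l) :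
    Monoid.exponent (Abelianization G) = p ^ k := by
  have := h.finite
  have hof : ∀ g : G, Abelianization.of g = 1 ↔ g ∈ Subgroup.zpowers (a ^ p ^ r) := fun g => by
    rw [← h.commutator_eq_zpowers_pow, ← Abelianization.ker_of, MonoidHom.mem_ker]
  have hmem : ∀ n, r ≤ n → a ^ p ^ n ∈ Subgroup.zpowers (a ^ p ^ r) := fun n hn => by
    rw [← Nat.add_sub_cancel' hn, pow_add, pow_mul]
    exact Subgroup.pow_mem _ (Subgroup.mem_zpowers _) _
  refine Nat.dvd_antisymm (Monoid.exponent_dvd_of_forall_pow_eq_one fun g => ?_)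
    (h.pow_dvd_of_pow_right_mem_zpowers ?_)
  · obtain ⟨g, rfl⟩ := QuotientGroup.mk_surjective g
    obtain ⟨X, Y, rfl⟩ := h.exists_eq g
    have ha : Abelianization.of a ^ p ^ k = 1 := by
      rw [← map_pow, hof]; exact hmem k (hrl.trans h.l_le_k)
    have hb : Abelianization.of b ^ p ^ k = 1 := by
      rw [← map_pow, h.pow_right, hof]; exact hmem l hrl
    change Abelianization.of _ ^ _ = _
    rw [map_mul, map_zpow, map_pow, mul_pow, ← zpow_natCast, zpow_comm, zpow_natCast, ha, one_zpow,
      pow_right_comm, hb, one_pow, one_mul]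
  · have hb : b ^ Monoid.exponent (Abelianization G) ∈ Subgroup.zpowers (a ^ p ^ r) := by
      rw [← hof, map_pow, Monoid.pow_exponent_eq_one]
    exact Subgroup.zpowers_le.2 (Subgroup.pow_mem _ (Subgroup.mem_zpowers a) _) hb

theorem eq_of_mulEquiv {m' k' r' : ℕ} {G' : Type*} [Group G'] {a' b' : G'}
    (h : StandardPair p m k l r a b) (h' : StandardPair p m' k' l r' a' b') (hrl : r ≤ l)
    (hrl' : r' ≤ l) (φ : G ≃* G') : m = m' ∧ k = k' ∧ r = r' := by
  have hinj := Nat.pow_right_injective hp.out.two_le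
  have hk : k = k' := hinj <| by
    simpa only [← h.exponent_abelianization hrl, ← h'.exponent_abelianization hrl'] using
      Monoid.exponent_eq_of_mulEquiv φ.abelianizationCongr
  have hkr : k + r = k' + r' := hinj <| by
    simpa only [← h.card_abelianization hrl, ← h'.card_abelianization hrl'] using
      Nat.card_congr φ.abelianizationCongr.toEquiv
  have hmk : m + k = m' + k' := hinj <| by
    simpa only [← h.card_eq, ← h'.card_eq] using Nat.card_congr φ.toEquiv
  omega

end StandardPair

namespace MetacyclicPair

variable {G : Type*} [Group G] {v : ℤ} {a b : G}

theorem of_zpow_left (h : MetacyclicPair v a b) {c : ℤ} (hc : a ∈ Subgroup.zpowers (a ^ c)) :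
    MetacyclicPair v (a ^ c) b where
  closure_eq_top := top_le_iff.1 <| h.closure_eq_top.symm.trans_le <| closure_pair_le
    (Subgroup.zpowers_le.2 (left_mem_closure_pair _ _) hc) (right_mem_closure_pair _ _)
  conj_eq := by rw [← conj_zpow, h.conj_eq, zpow_comm]

theorem of_pow_right (h : MetacyclicPair v a b) {j : ℕ} (hj : b ∈ Subgroup.zpowers (b ^ j)) :
    MetacyclicPair (v ^ j) a (b ^ j) where
  closure_eq_top := top_le_iff.1 <| h.closure_eq_top.symm.trans_le <| closure_pair_le
    (left_mem_closure_pair _ _) (Subgroup.zpowers_le.2 (right_mem_closure_pair _ _) hj)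
  conj_eq := by simpa using mul_inv_eq_of_eq_mul (h.pow_mul_zpow 1 j)

theorem zpow_mul_right (h : MetacyclicPair v a b) (x : ℤ) : MetacyclicPair v a (a ^ x * b) where
  closure_eq_top := top_le_iff.1 <| h.closure_eq_top.symm.trans_le <| closure_pair_le
    (left_mem_closure_pair _ _) <| (Subgroup.mul_mem_cancel_left _
      (Subgroup.zpow_mem _ (left_mem_closure_pair _ _) x)).1 (right_mem_closure_pair _ _)
  conj_eq := calc
    a ^ x * b * a * (a ^ x * b)⁻¹ = a ^ x * (b * a * b⁻¹) * (a ^ x)⁻¹ := by group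
    _ = a ^ v := by rw [h.conj_eq, ← zpow_add, add_comm, zpow_add, mul_inv_cancel_right]

theorem congr_zpow (h : MetacyclicPair v a b) {w : ℤ} (hw : a ^ v = a ^ w) :
    MetacyclicPair w a b :=
  ⟨h.closure_eq_top, h.conj_eq.trans hw⟩

/- The geometric sum of `1 + p ^ r` over `p ^ k` terms is `p ^ k * ε` with `ε` invertible modulo
`p ^ m`; with `β` an inverse of `ε`, the exponent `x = β * (1 - p ^ (l - k))` works. -/
theorem exists_zpow_mul_pow_eq {p m k l r : ℕ} (hodd : Odd p)
    (h : MetacyclicPair (1 + (p : ℤ) ^ r) a b) (hr : r ≠ 0) (ha : orderOf a = p ^ m)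
    (hb : b ^ p ^ k = a ^ p ^ l) (hkl : k ≤ l) : ∃ x : ℤ, (a ^ x * b) ^ p ^ k = a ^ p ^ k := by
  have hpr : (p : ℤ) ∣ p ^ r := dvd_pow_self _ hr
  obtain ⟨ε, hsum, hε⟩ := exists_geom_sum_pow_eq_mul hodd hpr
    (dvd_of_eq (add_sub_cancel_left 1 ((p : ℤ) ^ r)).symm) k
  obtain ⟨α, β, hαβ⟩ := isCoprime_pow_of_dvd_sub_one (hpr.trans hε) m
  refine ⟨β * (1 - p ^ (l - k)), ?_⟩
  have hpow := h.pow_eq (β * (1 - p ^ (l - k))) 1 (p ^ k)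
  rw [pow_one, pow_one, one_mul, hsum, hb] at hpow
  rw [hpow, ← zpow_natCast, ← zpow_natCast, ← zpow_add, ← mul_inv_eq_one, ← zpow_sub,
    ← orderOf_dvd_iff_zpow_eq_one, ha]
  refine ⟨-α * (p ^ k - p ^ l), ?_⟩
  push_cast
  rw [← Nat.sub_add_cancel hkl, pow_add, Nat.add_sub_cancel]
  linear_combination (p : ℤ) ^ k * (1 - p ^ (l - k)) * hαβ

variable {p : ℕ} [hp : Fact p.Prime]

theorem dvd_sub_one (h : MetacyclicPair v a b) (hG : IsPGroup p G) (ha : a ≠ 1) :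
    (p : ℤ) ∣ v - 1 := by
  obtain ⟨n, hn⟩ := hG b
  obtain ⟨m, hm⟩ := IsPGroup.iff_orderOf.1 hG a
  have hm0 : m ≠ 0 := by
    rintro rfl
    exact ha (orderOf_eq_one_iff.1 hm)
  have hav := h.pow_mul_zpow 1 (p ^ n)
  rw [hn, one_mul, mul_one, mul_one, eq_comm, ← mul_inv_eq_one, ← zpow_sub,
    ← orderOf_dvd_iff_zpow_eq_one, hm, Nat.cast_pow] at hav
  have hv := (dvd_pow_self (p : ℤ) hm0).trans hav
  rw [← ZMod.intCast_zmod_eq_zero_iff_dvd] at hv ⊢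
  push_cast at hv ⊢
  rwa [ZMod.pow_card_pow] at hv

theorem exists_one_add_pow (hp2 : p ≠ 2) (hG : IsPGroup p G)
    (h : MetacyclicPair v a b) :
    ∃ (b' : G) (r : ℕ), r ≠ 0 ∧ MetacyclicPair (1 + (p : ℤ) ^ r) a b' := by
  obtain ⟨w, hw, hab⟩ : ∃ w : ℤ, (p : ℤ) ∣ w - 1 ∧ MetacyclicPair w a b := by
    by_cases ha : a = 1
    · exact ⟨1, by simp, h.congr_zpow (by rw [ha, one_zpow, one_zpow])⟩
    · exact ⟨v, h.dvd_sub_one hG ha, h⟩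
  obtain ⟨m, hm⟩ := IsPGroup.iff_orderOf.1 hG a
  obtain ⟨r, j, hr, hj, hdvd⟩ := exists_dvd_pow_sub_one_add_pow hp.out hp2 hw m
  have hb : b ∈ Subgroup.zpowers (b ^ j) := by
    rw [← zpow_natCast]
    refine mem_zpowers_zpow_of_not_dvd hG b fun hd => ?_
    exact (hp.out.coprime_iff_not_dvd.1 hj) (Int.natCast_dvd_natCast.1 hd)
  refine ⟨b ^ j, r, hr, (hab.of_pow_right hb).congr_zpow ?_⟩
  rwa [← mul_inv_eq_one, ← zpow_sub, ← orderOf_dvd_iff_zpow_eq_one, hm, Nat.cast_pow]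

theorem le_add_of_pow_eq {m k l r : ℕ} (h : MetacyclicPair (1 + (p : ℤ) ^ r) a b)
    (ha : orderOf a = p ^ m) (hb : b ^ p ^ k = a ^ p ^ l) : m ≤ l + r := by
  have hcomm : b * a ^ p ^ l * b⁻¹ = a ^ p ^ l := by rw [← hb]; group
  rw [← conj_pow, h.conj_eq, ← zpow_natCast, ← zpow_mul, ← zpow_natCast a, ← mul_inv_eq_one,
    ← zpow_sub, ← orderOf_dvd_iff_zpow_eq_one, ha, Nat.cast_pow, add_mul, one_mul,
    add_sub_cancel_left, Nat.cast_pow, ← pow_add, add_comm r] at hcomm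
  exact (Nat.pow_dvd_pow_iff_le_right hp.out.one_lt).1 (mod_cast hcomm)

end MetacyclicPair

theorem exists_mem_zpowers_zpow_and_zpow_pow_eq {p m : ℕ} [hp : Fact p.Prime] {G : Type*}
    [Group G] (hG : IsPGroup p G) {a z : G} (ha : orderOf a = p ^ m)
    (hz : z ∈ Subgroup.zpowers a) :
    ∃ (c : ℤ) (l : ℕ), a ∈ Subgroup.zpowers (a ^ c) ∧ l ≤ m ∧ z = (a ^ c) ^ p ^ l := by
  obtain ⟨n, rfl⟩ := Subgroup.mem_zpowers_iff.1 hz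
  by_cases hn : a ^ n = 1
  · exact ⟨1, m, by simp, le_rfl, by rw [hn, zpow_one, ← ha, pow_orderOf_eq_one]⟩
  have hn0 : n ≠ 0 := fun h0 => hn (by rw [h0, zpow_zero])
  have hfin : FiniteMultiplicity (p : ℤ) n :=
    Int.finiteMultiplicity_iff.2 ⟨by simpa using hp.out.ne_one, hn0⟩
  obtain ⟨c, hnc, hc⟩ := hfin.exists_eq_pow_mul_and_not_dvd
  refine ⟨c, multiplicity (p : ℤ) n, mem_zpowers_zpow_of_not_dvd hG a hc, ?_, ?_⟩
  · by_contra hlt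
    rw [← orderOf_dvd_iff_zpow_eq_one, ha, hnc, Nat.cast_pow] at hn
    exact hn ((pow_dvd_pow _ (not_le.1 hlt).le).mul_right c)
  · rw [← zpow_natCast, ← zpow_mul, mul_comm, Nat.cast_pow, ← hnc]

theorem MetacyclicPair.exists_standardPair {p : ℕ} [hp : Fact p.Prime] (hp2 : p ≠ 2) {G : Type*}
    [Group G] [Finite G] {v : ℤ} {a b : G} (hG : IsPGroup p G) (h : MetacyclicPair v a b) :
    ∃ (m k l r : ℕ) (a b : G), StandardPair p m k l r a b := by
  obtain ⟨b, r, hr, h⟩ := h.exists_one_add_pow hp2 hG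
  have hn : (Subgroup.zpowers a).Normal := zpow_one a ▸ h.normal_zpowers 1
  obtain ⟨m, hm⟩ := IsPGroup.iff_orderOf.1 hG a
  obtain ⟨k, hk⟩ := hG.index (Subgroup.zpowers a)
  have hcard : Nat.card G = p ^ (m + k) := by
    rw [← Subgroup.card_mul_index (Subgroup.zpowers a), Nat.card_zpowers, hm, hk, pow_add]
  obtain ⟨c, l, hc, hlm, hbl⟩ := exists_mem_zpowers_zpow_and_zpow_pow_eq hG hm
    (hk ▸ Subgroup.pow_index_mem (Subgroup.zpowers a) b)
  have hm' : orderOf (a ^ c) = p ^ m := by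
    rw [← hm, ← Nat.card_zpowers, ← Nat.card_zpowers, le_antisymm (Subgroup.zpowers_le.2 hc)
      (Subgroup.zpowers_le.2 (Subgroup.zpow_mem _ (Subgroup.mem_zpowers a) c))]
  have h := h.of_zpow_left hc
  have hpow := hm' ▸ pow_orderOf_eq_one (a ^ c)
  rcases le_total l k with hlk | hkl
  · exact ⟨m, k, l, r, _, b, h, hcard, hpow, hbl, hr, hlk, hlm, h.le_add_of_pow_eq hm' hbl⟩
  · obtain ⟨x, hx⟩ := h.exists_zpow_mul_pow_eq (hp.out.odd_of_ne_two hp2) hr hm' hbl hkl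
    have h := h.zpow_mul_right x
    exact ⟨m, k, k, r, _, _, h, hcard, hpow, hx, hr, le_rfl, hkl.trans hlm,
      h.le_add_of_pow_eq hm' hx⟩

namespace StandardPair

variable {p m k l r : ℕ} {G : Type*} [Group G] {a b : G}

theorem min_right (h : StandardPair p m k l r a b) (hm : m ≠ 0) :
    StandardPair p m k l (min r m) a b := by
  rcases le_total r m with hrm | hmr
  · rwa [min_eq_left hrm]
  rw [min_eq_right hmr]
  refine { h with
    r_ne_zero := hm
    m_le := Nat.le_add_left m l
    conj_eq := (h.congr_zpow ?_).conj_eq }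
  rw [← Nat.add_sub_cancel' hmr, pow_add, zpow_add, zpow_add, zpow_mul, h.zpow_left, one_zpow]

/- With `y = p ^ (k - l) * (p ^ (r - l) - 1)`, the `p ^ l`-th power of `b ^ y` is
`a ^ (p ^ r - p ^ l)`, so that of `a * b ^ y` is `a ^ p ^ r = ⁅b, a⁆`. -/
theorem mul_pow_pow_eq (hodd : Odd p) (h : StandardPair p m k l r a b) (hlr : l ≤ r) :
    (a * b ^ (p ^ (k - l) * (p ^ (r - l) - 1))) ^ p ^ l = a ^ p ^ r := by
  set y := p ^ (k - l) * (p ^ (r - l) - 1) with hy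
  have hb : b ^ (y * p ^ l) = a ^ ((p : ℤ) ^ r - p ^ l) := by
    rw [hy, mul_right_comm, ← pow_add, Nat.sub_add_cancel h.l_le_k, pow_mul, h.pow_right,
      ← pow_mul, mul_tsub, ← pow_add, Nat.add_sub_cancel' hlr, ← zpow_natCast, mul_one,
      Nat.cast_sub (Nat.pow_le_pow_right hodd.pos hlr), Nat.cast_pow, Nat.cast_pow]
  obtain ⟨ε, hsum, c, hc⟩ := exists_geom_sum_pow_eq_mul hodd (dvd_pow_self (p : ℤ) h.r_ne_zero)
    (dvd_one_add_pow_sub_one _ y) l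
  have hexp : (p : ℤ) ^ l * ε + (p ^ r - p ^ l) = p ^ r + p ^ m * (p ^ (l + r - m) * c) := by
    rw [← mul_assoc, ← pow_add, Nat.add_sub_cancel' h.m_le, pow_add]
    linear_combination (p : ℤ) ^ l * hc
  have hpow := h.pow_eq 1 y (p ^ l)
  rwa [zpow_one, one_mul, hsum, hb, ← zpow_add, hexp, zpow_add, zpow_mul a (p ^ m), h.zpow_left,
    one_zpow, mul_one, ← Nat.cast_pow, zpow_natCast] at hpow

theorem exists_r_eq_l (hodd : Odd p) (h : StandardPair p m k l r a b) (hl : l ≠ 0) (hlr : l ≤ r)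
    (hrm : r ≤ m) : ∃ a' : G, StandardPair p (l + m - r) (k + r - l) l l a' b := by
  have hlk := h.l_le_k
  have hmr := h.m_le
  have hpow := h.mul_pow_pow_eq hodd hlr
  set y := p ^ (k - l) * (p ^ (r - l) - 1)
  refine ⟨a * b ^ y, ⟨?_, ?_⟩, ?_, ?_, ?_, hl, by omega, by omega, by omega⟩
  · refine top_le_iff.1 <| h.closure_eq_top.symm.trans_le <| closure_pair_le ?_
      (right_mem_closure_pair _ _)
    exact (Subgroup.mul_mem_cancel_right _ (Subgroup.pow_mem _ (right_mem_closure_pair _ _) y)).1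
      (left_mem_closure_pair _ _)
  · calc
      b * (a * b ^ y) * b⁻¹ = b * a * b⁻¹ * b ^ y := by group
      _ = a ^ p ^ r * (a * b ^ y) := by
        rw [h.conj_eq, add_comm, zpow_add, zpow_one, ← Nat.cast_pow, zpow_natCast, mul_assoc]
      _ = (a * b ^ y) ^ (1 + (p : ℤ) ^ l) := by
        rw [← hpow, add_comm, zpow_add, zpow_one, ← Nat.cast_pow, zpow_natCast]
  · rw [h.card_eq]; congr 1; omega
  · rw [Nat.add_sub_assoc hrm, pow_add, pow_mul, hpow, ← pow_mul, ← pow_add,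
      Nat.add_sub_cancel' hrm, h.pow_left]
  · rw [hpow, Nat.add_sub_assoc hlr, pow_add, pow_mul, h.pow_right, ← pow_mul, ← pow_add,
      Nat.add_sub_cancel' hlr]

theorem exists_r_le_l (hodd : Odd p) (h : StandardPair p m k l r a b) (hl : l ≠ 0) :
    ∃ (m' k' r' : ℕ) (a' : G), r' ≤ l ∧ StandardPair p m' k' l r' a' b := by
  rcases le_total r l with hrl | hlr
  · exact ⟨m, k, r, a, hrl, h⟩
  · have hm : m ≠ 0 := (hl.bot_lt.trans_le h.l_le_m).ne'
    obtain ⟨a', h'⟩ := (h.min_right hm).exists_r_eq_l hodd hl (le_min hlr h.l_le_m)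
      (min_le_right r m)
    exact ⟨_, _, l, a', le_rfl, h'⟩

end StandardPair

theorem IsRegularPGroup.exists_standardPair {p e l : ℕ} [hp : Fact p.Prime] (hp2 : p ≠ 2)
    (hl : l ≠ 0) {P : Type} [Group P] (hreg : IsRegularPGroup p P)
    (hcard : Nat.card P = p ^ (e + l)) (htype : HasTypeInvariants p P [e, l]) :
    ∃ (r u : ℕ) (a b : P), r ≤ l ∧ u + l ≤ e ∧ StandardPair p (l + u) (e - u) l r a b := by
  have hfin : Finite P := Nat.finite_of_card_ne_zero (hcard ▸ pow_ne_zero _ hp.out.ne_zero)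
  have hP : IsPGroup p P := IsPGroup.of_card hcard
  have hodd := hp.out.odd_of_ne_two hp2
  obtain ⟨a, b, hgen, hba⟩ := exists_conj_mem_zpowers hP
    (fun g hg => hreg.exists_pow_eq_of_mem_mhoOne_top hP hg)
    (hreg.card_omegaSubgroup_one hP ▸ htype.card_omegaSubgroup_one_le hP)
  obtain ⟨v, hv⟩ := Subgroup.mem_zpowers_iff.1 hba
  obtain ⟨m, k, l', r, a, b, h⟩ :=
    MetacyclicPair.exists_standardPair hp2 hP (⟨hgen, hv.symm⟩ : MetacyclicPair v a b)
  obtain rfl : l' = l := (h.hasTypeInvariants hodd 1).symm.trans (htype 1)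
  obtain ⟨m, k, r, a, hrl, h⟩ := h.exists_r_le_l hodd hl
  have hlm := h.l_le_m
  have hlk := h.l_le_k
  have hmk : e + l' = m + k := Nat.pow_right_injective hp.out.two_le (hcard.symm.trans h.card_eq)
  refine ⟨r, m - l', a, b, hrl, by omega, ?_⟩
  rwa [Nat.add_sub_cancel' hlm, (by omega : e - (m - l') = k)]

theorem index_zpowers_ofAdd_natCast (n : ℕ) :
    (Subgroup.zpowers (Multiplicative.ofAdd (n : ℤ))).index = n :=
  calc
    _ = (AddSubgroup.zmultiples (n : ℤ)).index := AddSubgroup.index_toSubgroup _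
    _ = n := (Nat.card_congr (Int.quotientZMultiplesNatEquivZMod n).toEquiv).trans (Nat.card_zmod n)

universe u

section CyclicExtension

variable {N : Type u} [Group N] {n : ℕ} {σ : MulAut N} {z : N}

theorem inl_inv_mul_inr_mem_center (hz : σ z = z) (hσ : σ ^ n = MulAut.conj z) :
    SemidirectProduct.inl z⁻¹ * SemidirectProduct.inr (Multiplicative.ofAdd (n : ℤ)) ∈
      Subgroup.center (N ⋊[zpowersHom (MulAut N) σ] Multiplicative ℤ) := by
  have hfix : ∀ i : ℤ, (σ ^ i) z = z := fun i =>
    Subgroup.zpow_mem (MulAction.stabilizer (MulAut N) z) hz i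
  refine Subgroup.mem_center_iff.2 fun g => SemidirectProduct.ext ?_ (mul_comm _ _)
  simp [zpowersHom_apply, hσ, hfix, mul_assoc]

theorem index_range_mk'_comp_inl {φ : Multiplicative ℤ →* MulAut N}
    {C : Subgroup (N ⋊[φ] Multiplicative ℤ)} [C.Normal]
    (hC : C.map SemidirectProduct.rightHom = Subgroup.zpowers (Multiplicative.ofAdd (n : ℤ))) :
    ((QuotientGroup.mk' C).comp SemidirectProduct.inl).range.index = n := by
  rw [MonoidHom.range_comp, Subgroup.index_map, QuotientGroup.ker_mk', QuotientGroup.range_mk',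
    Subgroup.index_top, mul_one, SemidirectProduct.range_inl_eq_ker_rightHom, sup_comm,
    ← Subgroup.comap_map_eq, hC,
    Subgroup.index_comap_of_surjective _ SemidirectProduct.rightHom_surjective,
    index_zpowers_ofAdd_natCast]

theorem injective_mk'_zpowers_comp_inl {φ : Multiplicative ℤ →* MulAut N}
    {c : N ⋊[φ] Multiplicative ℤ} [(Subgroup.zpowers c).Normal] (hc : c.right ≠ 1) :
    Function.Injective
      ((QuotientGroup.mk' (Subgroup.zpowers c)).comp SemidirectProduct.inl) := by
  refine (injective_iff_map_eq_one _).2 fun x hx => ?_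
  obtain ⟨i, hi⟩ := Subgroup.mem_zpowers_iff.1 ((QuotientGroup.eq_one_iff _).1 hx)
  have hci : c.right ^ i = 1 :=
    (map_zpow SemidirectProduct.rightHom c i).symm.trans (by rw [hi]; rfl)
  obtain rfl : i = 0 := by
    rw [← toAdd_eq_zero, toAdd_zpow, smul_eq_mul, mul_eq_zero, toAdd_eq_zero] at hci
    exact hci.resolve_right hc
  exact SemidirectProduct.inl_injective (by rw [← hi, zpow_zero, map_one])

/- The group is the quotient of `N ⋊ ⟨t⟩` by the central subgroup generated by `z⁻¹ * t ^ n`. -/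
theorem exists_cyclic_extension (hn : n ≠ 0) (hz : σ z = z) (hσ : σ ^ n = MulAut.conj z) :
    ∃ (G : Type u) (_ : Group G) (f : N →* G) (b : G), Nat.card G = Nat.card N * n ∧
      f.range ⊔ Subgroup.zpowers b = ⊤ ∧ b ^ n = f z ∧ ∀ x, b * f x * b⁻¹ = f (σ x) := by
  let φ := zpowersHom (MulAut N) σ
  let t : N ⋊[φ] Multiplicative ℤ := SemidirectProduct.inr (Multiplicative.ofAdd 1)
  have ht : ∀ i : ℤ, t ^ i = SemidirectProduct.inr (Multiplicative.ofAdd i) := fun i => by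
    rw [← map_zpow, ← ofAdd_zsmul, zsmul_one, Int.cast_id]
  let c : N ⋊[φ] Multiplicative ℤ :=
    SemidirectProduct.inl z⁻¹ * SemidirectProduct.inr (Multiplicative.ofAdd (n : ℤ))
  have hc : c ∈ Subgroup.center _ := inl_inv_mul_inr_mem_center hz hσ
  have hright : c.right = Multiplicative.ofAdd (n : ℤ) := one_mul _
  have hnormal : (Subgroup.zpowers c).Normal := ⟨fun d hd g => by
    rwa [Subgroup.mem_center_iff.1 (Subgroup.zpowers_le.2 hc hd) g, mul_inv_cancel_right]⟩
  let π := QuotientGroup.mk' (Subgroup.zpowers c)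
  refine ⟨_, inferInstance, π.comp SemidirectProduct.inl, π t, ?_, ?_, ?_, fun x => ?_⟩
  · have hinj : Function.Injective (π.comp SemidirectProduct.inl) :=
      injective_mk'_zpowers_comp_inl (by simpa [hright] using hn)
    have hmap := (MonoidHom.map_zpowers SemidirectProduct.rightHom c).trans (congrArg _ hright)
    rw [← Subgroup.card_mul_index (π.comp SemidirectProduct.inl).range,
      ← Nat.card_congr (MonoidHom.ofInjective hinj).toEquiv, index_range_mk'_comp_inl hmap]
  · refine eq_top_iff.2 fun g _ => ?_
    obtain ⟨g, rfl⟩ := QuotientGroup.mk'_surjective _ g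
    rw [← SemidirectProduct.inl_left_mul_inr_right g, map_mul]
    refine Subgroup.mul_mem_sup ⟨g.left, rfl⟩ ⟨g.right.toAdd, ?_⟩
    exact (map_zpow π t _).symm.trans (congrArg π (ht _))
  · refine (map_pow π t n).symm.trans (QuotientGroup.eq.2 ?_)
    rw [← zpow_natCast, ht, ← inv_mem_iff, mul_inv_rev, inv_inv, ← map_inv]
    exact Subgroup.mem_zpowers c
  · have hφ : φ (Multiplicative.ofAdd 1) = σ := zpow_one σ
    have hconj : SemidirectProduct.inl (σ x) = t * SemidirectProduct.inl x * t⁻¹ := by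
      rw [← hφ, SemidirectProduct.inl_aut, map_inv]
    simp only [MonoidHom.comp_apply, hconj, map_mul, map_inv]

end CyclicExtension

theorem exists_group_metacyclicPair {m n : ℕ} (hn : n ≠ 0) {v c : ℤ} (hv : (m : ℤ) ∣ v ^ n - 1)
    (hc : (m : ℤ) ∣ (v - 1) * c) :
    ∃ (G : Type) (_ : Group G) (a b : G), MetacyclicPair v a b ∧ Nat.card G = m * n ∧
      a ^ m = 1 ∧ b ^ n = a ^ c := by
  rw [← ZMod.intCast_zmod_eq_zero_iff_dvd] at hv hc
  push_cast at hv hc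
  let u : (ZMod m)ˣ := Units.ofPowEqOne (v : ZMod m) n (sub_eq_zero.1 hv) hn
  let σ : MulAut (Multiplicative (ZMod m)) :=
    (MulAutMultiplicative (ZMod m)).symm (AddAut.mulLeft u)
  have hσ : ∀ i : ℤ, σ (Multiplicative.ofAdd (i : ZMod m)) =
      Multiplicative.ofAdd ((v * i : ℤ) : ZMod m) := fun i => by rw [Int.cast_mul]; rfl
  have hσn : σ ^ n = 1 := by
    rw [← map_pow, ← map_pow, Units.pow_ofPowEqOne, map_one, map_one]
  obtain ⟨G, _, f, b, hcard, hgen, hpow, hconj⟩ := exists_cyclic_extension (σ := σ)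
    (z := Multiplicative.ofAdd (c : ZMod m)) hn
    (by rw [hσ, ← sub_eq_zero.1 ((sub_one_mul _ _).symm.trans hc), Int.cast_mul])
    (by rw [hσn]; ext; simp)
  have hf : ∀ i : ℤ, f (Multiplicative.ofAdd (i : ZMod m)) =
      f (Multiplicative.ofAdd 1) ^ i := fun i => by
    rw [← map_zpow, ← ofAdd_zsmul, zsmul_one]
  refine ⟨G, _, f (Multiplicative.ofAdd 1), b, ⟨?_, ?_⟩, ?_, ?_, hpow.trans (hf c)⟩
  · refine top_le_iff.1 (hgen.symm.trans_le (sup_le ?_ ?_))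
    · rintro _ ⟨x, rfl⟩
      obtain ⟨i, hi⟩ := ZMod.intCast_surjective x.toAdd
      obtain rfl : Multiplicative.ofAdd (i : ZMod m) = x := congrArg Multiplicative.ofAdd hi
      exact hf i ▸ Subgroup.zpow_mem _ (left_mem_closure_pair _ _) i
    · exact Subgroup.zpowers_le.2 (right_mem_closure_pair _ _)
  · rw [hconj, ← hf, ← mul_one v, ← hσ, Int.cast_one]
  · rw [hcard, Nat.card_congr Multiplicative.toAdd, Nat.card_zmod]
  · rw [← map_pow, ← ofAdd_nsmul, nsmul_one, ZMod.natCast_self, ofAdd_zero, map_one]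

theorem exists_group_standardPair {p m k l r : ℕ} (hp : p.Prime) (hp2 : p ≠ 2) (hr : r ≠ 0)
    (hlk : l ≤ k) (hlm : l ≤ m) (hm : m ≤ l + r) :
    ∃ (G : Type) (_ : Group G) (a b : G), StandardPair p m k l r a b := by
  have hv : (p : ℤ) ^ m ∣ (1 + (p : ℤ) ^ r) ^ p ^ k - 1 := by
    obtain ⟨ε, hsum, -⟩ := exists_geom_sum_pow_eq_mul (hp.odd_of_ne_two hp2)
      (dvd_pow_self (p : ℤ) hr) (dvd_of_eq (add_sub_cancel_left 1 ((p : ℤ) ^ r)).symm) k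
    rw [← geom_sum_mul, hsum, add_sub_cancel_left, mul_right_comm, ← pow_add]
    exact (pow_dvd_pow _ (by omega)).mul_right ε
  have hc : (p : ℤ) ^ m ∣ (1 + (p : ℤ) ^ r - 1) * p ^ l := by
    rw [add_sub_cancel_left, ← pow_add]
    exact pow_dvd_pow _ (by omega)
  obtain ⟨G, _, a, b, h, hcard, ha, hb⟩ := exists_group_metacyclicPair (m := p ^ m)
    (pow_ne_zero k hp.ne_zero) (mod_cast hv) (mod_cast hc)
  exact ⟨G, _, a, b, h, by rw [hcard, pow_add], ha, mod_cast hb, hr, hlk, hlm, hm⟩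

section Counting

variable {N : ℕ}

/-- Isomorphism of two group structures on `Fin N`, as in `groupClassCount`. -/
def IsIsomorphicGroup (s t : Group (Fin N)) : Prop :=
  Nonempty (@MulEquiv (Fin N) (Fin N) (mulOfGroup _ s) (mulOfGroup _ t))

theorem isIsomorphicGroup_equivalence : Equivalence (IsIsomorphicGroup (N := N)) where
  refl s := ⟨@MulEquiv.refl _ (mulOfGroup _ s)⟩
  symm {s t} := Nonempty.map (@MulEquiv.symm _ _ (mulOfGroup _ s) (mulOfGroup _ t))
  trans {s t w} := Nonempty.map2
    (@MulEquiv.trans _ _ _ (mulOfGroup _ s) (mulOfGroup _ t) (mulOfGroup _ w))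

theorem groupClassCount_eq_card {ι : Type*} {Q : Group (Fin N) → Prop} (s : ι → Group (Fin N))
    (hQ : ∀ i, Q (s i)) (hinj : ∀ i j, IsIsomorphicGroup (s i) (s j) → i = j)
    (hsurj : ∀ t, Q t → ∃ i, IsIsomorphicGroup (s i) t) : groupClassCount N Q = Nat.card ι := by
  have hequiv := isIsomorphicGroup_equivalence.comap (Subtype.val : {s // Q s} → Group (Fin N))
  refine (Nat.card_congr (Equiv.ofBijective (fun i => Quot.mk _ ⟨s i, hQ i⟩) ⟨?_, ?_⟩)).symm
  · exact fun i j hij => hinj i j ((hequiv.quot_mk_eq_iff _ _).1 hij)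
  · rintro ⟨t, ht⟩
    obtain ⟨i, hi⟩ := hsurj t ht
    exact ⟨i, Quot.sound hi⟩

end Counting

theorem StandardPair.exists_of_equiv {p m k l r : ℕ} {F G : Type*} [Group G] {a b : G}
    (h : StandardPair p m k l r a b) (f : F ≃ G) :
    ∃ (_ : Group F) (a b : F), StandardPair p m k l r a b :=
  let _ := f.group
  ⟨_, _, _, h.map f.mulEquiv.symm⟩

theorem exists_group_fin_standardPair {p m k l r N : ℕ} (hp : p.Prime) (hp2 : p ≠ 2) (hr : r ≠ 0)
    (hlk : l ≤ k) (hlm : l ≤ m) (hm : m ≤ l + r) (hN : N = p ^ (m + k)) :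
    ∃ (_ : Group (Fin N)) (a b : Fin N), StandardPair p m k l r a b := by
  have : Fact p.Prime := ⟨hp⟩
  obtain ⟨G, _, a, b, h⟩ := exists_group_standardPair hp hp2 hr hlk hlm hm
  have := h.finite
  exact h.exists_of_equiv (Finite.equivFinOfCardEq (h.card_eq.trans hN.symm)).symm

theorem StandardPair.isIsomorphicGroup {p m k l r N : ℕ} [Fact p.Prime] {s t : Group (Fin N)}
    {a b a' b' : Fin N} (h : @StandardPair p m k l r (Fin N) s a b)
    (h' : @StandardPair p m k l r (Fin N) t a' b') : IsIsomorphicGroup s t :=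
  @nonempty_mulEquiv p m k l r (Fin N) s a b _ (Fin N) t a' b' h h'

theorem StandardPair.eq_of_isIsomorphicGroup {p m k l r m' k' r' N : ℕ} [Fact p.Prime]
    {s t : Group (Fin N)} {a b a' b' : Fin N} (h : @StandardPair p m k l r (Fin N) s a b)
    (h' : @StandardPair p m' k' l r' (Fin N) t a' b') (hrl : r ≤ l) (hrl' : r' ≤ l)
    (hst : IsIsomorphicGroup s t) : m = m' ∧ k = k' ∧ r = r' :=
  hst.elim
    (@eq_of_mulEquiv p m k l r (Fin N) s a b _ m' k' r' (Fin N) t a' b' h h' hrl hrl')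

/-- The pairs `(r, u)` for which `StandardPair p (l + u) (e - u) l r` describes a regular group of
type `(e, l)`; distinct pairs give non-isomorphic groups. -/
def standardParams (e l : ℕ) : Finset (Σ _ : ℕ, ℕ) :=
  (Finset.Icc 1 l).sigma fun r => Finset.range (min r (e - l) + 1)

theorem mem_standardParams {e l r u : ℕ} (hle : l ≤ e) :
    ⟨r, u⟩ ∈ standardParams e l ↔ r ≠ 0 ∧ r ≤ l ∧ u ≤ r ∧ u + l ≤ e := by
  simp only [standardParams, Finset.mem_sigma, Finset.mem_Icc, Finset.mem_range]
  omega

theorem card_standardParams (e l : ℕ) :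
    Nat.card (standardParams e l) = ∑ r ∈ Finset.Icc 1 l, (min r (e - l) + 1) := by
  rw [Nat.card_eq_fintype_card, Fintype.card_coe, standardParams, Finset.card_sigma]
  simp only [Finset.card_range]

theorem psi_type_3_general {p e l : ℕ} (hp : p.Prime) (hp2 : p ≠ 2) (hl : l ≠ 0) (hle : l ≤ e) :
    PsiType p e [l] = ∑ r ∈ Finset.Icc 1 l, (min r (e - l) + 1) := by
  have : Fact p.Prime := ⟨hp⟩
  have hodd := hp.odd_of_ne_two hp2
  have hex : ∀ x : standardParams e l,
      ∃ (_ : Group (Fin (p ^ (e + [l].sum)))) (a b : Fin (p ^ (e + [l].sum))),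
        StandardPair p (l + x.1.2) (e - x.1.2) l x.1.1 a b := fun ⟨⟨r, u⟩, hx⟩ => by
    obtain ⟨hr, -, hur, hue⟩ := (mem_standardParams hle).1 hx
    refine exists_group_fin_standardPair hp hp2 hr ?_ ?_ ?_ (congrArg _ ?_) <;>
      simp only [List.sum_singleton] <;> omega
  choose s a b h using hex
  rw [← card_standardParams]
  refine groupClassCount_eq_card s ?_ ?_ ?_
  · rintro ⟨⟨r, u⟩, hx⟩
    obtain ⟨-, -, -, hue⟩ := (mem_standardParams hle).1 hx
    have he : e - u + (l + u) - l = e := by omega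
    let _ := s ⟨⟨r, u⟩, hx⟩
    have htype := (h ⟨_, hx⟩).hasTypeInvariants hodd
    rw [he] at htype
    exact ⟨(h ⟨_, hx⟩).isRegularPGroup hodd, htype⟩
  · rintro ⟨⟨r, u⟩, hx⟩ ⟨⟨r', u'⟩, hx'⟩ hiso
    obtain ⟨-, hrl, -⟩ := (mem_standardParams hle).1 hx
    obtain ⟨-, hrl', -⟩ := (mem_standardParams hle).1 hx'
    obtain ⟨hu, -, rfl⟩ := (h ⟨_, hx⟩).eq_of_isIsomorphicGroup (h ⟨_, hx'⟩) hrl hrl' hiso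
    obtain rfl := Nat.add_left_cancel hu
    rfl
  · rintro t ⟨hreg, htype⟩
    obtain ⟨r, u, a', b', hrl, hue, hstd⟩ :=
      hreg.exists_standardPair hp2 hl (Nat.card_fin _) htype
    have hmem : ⟨r, u⟩ ∈ standardParams e l := (mem_standardParams hle).2
      ⟨hstd.r_ne_zero, hrl, Nat.le_of_add_le_add_left hstd.m_le, hue⟩
    exact ⟨⟨_, hmem⟩, (h ⟨_, hmem⟩).isIsomorphicGroup hstd⟩

/-- For every prime `p ≥ 5`, the number `Ψ_{n-3}^p(3)` of isomorphism
classes of regular `p`-groups of type `(n-3, 3)` equals `6` if `n = 7`, `8` if `n = 8`,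
and `9` if `n ≥ 9`. -/
theorem psi_type_3 (p : ℕ) (hp : p.Prime) (hp5 : 5 ≤ p) (n : ℕ) (hn : 7 ≤ n) :
    PsiType p (n - 3) [3] = (if n = 7 then 6 else if n = 8 then 8 else 9) := by
  have hIcc : Finset.Icc 1 3 = {1, 2, 3} := rfl
  rw [psi_type_3_general hp (by omega) three_ne_zero (by omega), hIcc,
    Finset.sum_insert (by decide), Finset.sum_insert (by decide), Finset.sum_singleton]
  split_ifs <;> omega
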